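/- Let (R,m) be a generalized Cohen-Macaulay local ring of dimension d and I an ideal generated by a standard system of parameters. Then for i = 0,1,...,d-1, the Hilbert coefficient satisfies e_{d-i}(I) = (-1)^{d-i} Σ_{j=0}^{i} C(i-1, j-1)·λ(Hʲ_m(R)). -/

import Mathlib

open IsLocalRing Filter Function CategoryTheory

universe u

section Defs

variable (R : Type u) [CommRing R]

/-- The length of a module, as the Krull dimension of its lattice of submodules. -/
noncomputable def mlen (M : Type u) [AddCommGroup M] [Module R M] : WithBot ℕ∞ :=
  Order.krullDim (Submodule R M)

/-- The (Krull) dimension of a module. -/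
noncomputable def mdim (M : Type u) [AddCommGroup M] [Module R M] : WithBot ℕ∞ :=
  ringKrullDim (R ⧸ Module.annihilator R M)

/-- The depth of `M` with respect to an ideal `I`: the supremum of the lengths of
`M`-regular sequences consisting of elements of `I`. -/
noncomputable def idepth (I : Ideal R) (M : Type u) [AddCommGroup M] [Module R M] : ℕ∞ :=
  sSup {n : ℕ∞ | ∃ rs : List R, (rs.length : ℕ∞) = n ∧ (∀ r ∈ rs, r ∈ I) ∧
    RingTheory.Sequence.IsRegular M rs}

/-- The depth of a module over a local ring. -/
noncomputable def mdepth [IsLocalRing R] (M : Type u) [AddCommGroup M] [Module R M] : ℕ∞ :=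
  idepth R (maximalIdeal R) M

/-- A Cohen–Macaulay module over a local ring: depth = dimension. -/
def IsCMMod [IsLocalRing R] (M : Type u) [AddCommGroup M] [Module R M] : Prop :=
  (mdepth R M : WithBot ℕ∞) = mdim R M

/-- A Cohen–Macaulay local ring. -/
def IsCMRing [IsLocalRing R] : Prop := (mdepth R R : WithBot ℕ∞) = ringKrullDim R

/-- A maximal Cohen–Macaulay module: finite with depth = dim R. -/
def IsMCMMod [IsLocalRing R] (M : Type u) [AddCommGroup M] [Module R M] : Prop :=
  Module.Finite R M ∧ (mdepth R M : WithBot ℕ∞) = ringKrullDim R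

/-- `H⁰_m(M)`: the submodule of elements killed by a power of the maximal ideal. -/
def H0 [IsLocalRing R] (M : Type u) [AddCommGroup M] [Module R M] : Submodule R M :=
  ⨆ n : ℕ, Submodule.torsionBySet R M ((maximalIdeal R ^ n : Ideal R) : Set R)

/-- The `i`-th local cohomology of `M` with support in the maximal ideal. -/
noncomputable def lcoh [IsLocalRing R] (i : ℕ) (M : Type u) [AddCommGroup M] [Module R M] :
    ModuleCat.{u} R :=
  (localCohomology (maximalIdeal R) i).obj (ModuleCat.of R M)

/-- The value at `n` of the Hilbert–Samuel polynomial in dimension `d` with coefficients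
`e 0, …, e d`:  `∑ (-1)^i eᵢ C(n+d-1-i, d-i)`. -/
def hsPoly (d : ℕ) (e : ℕ → ℤ) (n : ℕ) : ℤ :=
  ∑ i ∈ Finset.range (d + 1), (-1 : ℤ) ^ i * e i * ((n + d - 1 - i).choose (d - i) : ℤ)

/-- `I` is a parameter ideal for `M` of dimension `d`: generated by `d` elements with
`M/IM` of finite length. -/
def IsParameterIdeal [IsLocalRing R] (I : Ideal R) (d : ℕ) (M : Type u) [AddCommGroup M]
    [Module R M] : Prop :=
  (∃ a : Fin d → R, I = Ideal.span (Set.range a)) ∧ mlen R (M ⧸ (I • (⊤ : Submodule R M))) < ⊤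

/-- `ℓ` records the Hilbert–Samuel function of `I` on `M`:  `ℓ n = λ(M/IⁿM)`. -/
def IsHilbSeq (I : Ideal R) (M : Type u) [AddCommGroup M] [Module R M] (ℓ : ℕ → ℕ) : Prop :=
  ∀ n : ℕ, mlen R (M ⧸ (I ^ n • (⊤ : Submodule R M))) = ((ℓ n : ℕ∞) : WithBot ℕ∞)

/-- `e 0, …, e d` are the Hilbert coefficients of `I` on `M`: the Hilbert–Samuel function
eventually agrees with the Hilbert–Samuel polynomial with these coefficients. -/
def HasHilbCoeffs (I : Ideal R) (M : Type u) [AddCommGroup M] [Module R M] (d : ℕ)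
    (e : ℕ → ℤ) : Prop :=
  ∃ ℓ : ℕ → ℕ, IsHilbSeq R I M ℓ ∧ ∀ᶠ n in atTop, (ℓ n : ℤ) = hsPoly d e n

/-- A local ring is unmixed if every associated prime of its completion has
dimension equal to `dim R`. -/
def Unmixed [IsLocalRing R] : Prop :=
  ∀ p ∈ associatedPrimes (AdicCompletion (maximalIdeal R) R)
      (AdicCompletion (maximalIdeal R) R),
    ringKrullDim ((AdicCompletion (maximalIdeal R) R) ⧸ p) = ringKrullDim R

/-- The height of an ideal: the infimum of the heights of the primes containing it. -/
noncomputable def idealHeight (I : Ideal R) : ℕ∞ :=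
  ⨅ p ∈ {p : PrimeSpectrum R | I ≤ p.asIdeal}, Order.height p

/-- A regular local ring: the maximal ideal is generated by `dim R` elements. -/
def IsRegularLocal [IsLocalRing R] : Prop :=
  ∃ s : Finset R, Ideal.span (s : Set R) = maximalIdeal R ∧
    ((s.card : ℕ∞) : WithBot ℕ∞) = ringKrullDim R

end Defs
/-- The binomial coefficient `C(i-1, j-1)` with the conventions `C(-1,-1) = 1` and
`C(i-1,-1) = 0` for `i ≥ 1`, `C(-1,j-1) = 0` for `j ≥ 1`. -/
def bin (i j : ℕ) : ℕ :=
  if i = 0 then (if j = 0 then 1 else 0)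
  else if j = 0 then 0 else (i - 1).choose (j - 1)



section LocalCohomologyModel

variable (R : Type u) [CommRing R]

/-- The cyclic module `R / J`. -/
noncomputable abbrev cyc (J : Ideal R) : ModuleCat.{u} R := ModuleCat.of R (R ⧸ J)

/-- The projection `R / J ⟶ R / J'` for `J ≤ J'`. -/
noncomputable def cycMap {J J' : Ideal R} (hJ : J ≤ J') : cyc R J ⟶ cyc R J' :=
  ModuleCat.ofHom (Submodule.mapQ J J' LinearMap.id hJ)

lemma cycMap_self (J : Ideal R) (hJ : J ≤ J) : cycMap R hJ = 𝟙 _ := by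
  apply ModuleCat.hom_ext
  apply LinearMap.ext
  intro x
  obtain ⟨x, rfl⟩ := Submodule.Quotient.mk_surjective _ x
  rfl

lemma cycMap_comp {J J' J'' : Ideal R} (h1 : J ≤ J') (h2 : J' ≤ J'') :
    cycMap R h1 ≫ cycMap R h2 = cycMap R (h1.trans h2) := by
  apply ModuleCat.hom_ext
  apply LinearMap.ext
  intro x
  obtain ⟨x, rfl⟩ := Submodule.Quotient.mk_surjective _ x
  rfl

variable [IsLocalRing R]

/-- The transition maps of the direct system `Ext (R/m^k) M i`. -/
noncomputable def extTrans (i : ℕ) (M : ModuleCat.{u} R) (k l : ℕ) (hkl : k ≤ l) :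
    Abelian.Ext (cyc R (maximalIdeal R ^ k)) M i →ₗ[R]
      Abelian.Ext (cyc R (maximalIdeal R ^ l)) M i :=
  (Abelian.Ext.mk₀ (cycMap R (Ideal.pow_le_pow_right hkl))).precompOfLinear R M (zero_add i)

lemma extTrans_apply (i : ℕ) (M : ModuleCat.{u} R) (k l : ℕ) (hkl : k ≤ l)
    (x : Abelian.Ext (cyc R (maximalIdeal R ^ k)) M i) :
    extTrans R i M k l hkl x =
      (Abelian.Ext.mk₀ (cycMap R (Ideal.pow_le_pow_right hkl))).comp x (zero_add i) := rfl

instance extDirected (i : ℕ) (M : ModuleCat.{u} R) :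
    DirectedSystem (fun k => Abelian.Ext (cyc R (maximalIdeal R ^ k)) M i)
      (fun k l hkl => extTrans R i M k l hkl) where
  map_self k x := by
    simp [extTrans_apply, cycMap_self]
  map_map k l n hkl hln x := by
    simp only [extTrans_apply]
    rw [← Abelian.Ext.comp_assoc (a₁₂ := 0) _ _ _ (by lia) (by lia) (by lia),
      Abelian.Ext.mk₀_comp_mk₀, cycMap_comp]

/-- A model for local cohomology. -/
abbrev HH (i : ℕ) (M : ModuleCat.{u} R) : Type u :=
  Module.DirectLimit (fun k => Abelian.Ext (cyc R (maximalIdeal R ^ k)) M i) (extTrans R i M)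

/-- The structure maps. -/
noncomputable abbrev HHof (i : ℕ) (M : ModuleCat.{u} R) (k : ℕ) :
    Abelian.Ext (cyc R (maximalIdeal R ^ k)) M i →ₗ[R] HH R i M :=
  Module.DirectLimit.of R ℕ (fun k => Abelian.Ext (cyc R (maximalIdeal R ^ k)) M i)
    (extTrans R i M) k

/-- The map on local cohomology induced by an Ext class. -/
noncomputable def HHmap {M N : ModuleCat.{u} R} {n i j : ℕ} (α : Abelian.Ext M N n)
    (hij : i + n = j) : HH R i M →ₗ[R] HH R j N :=
  Module.DirectLimit.map (fun k => α.postcompOfLinear R (cyc R (maximalIdeal R ^ k)) hij)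
    (by
      intro k l hkl
      ext x
      simp only [LinearMap.comp_apply, extTrans_apply]
      change (Abelian.Ext.comp _ x (zero_add i)).comp α hij =
        Abelian.Ext.comp _ (x.comp α hij) (zero_add j)
      exact Abelian.Ext.comp_assoc (a₁₂ := i) (a₂₃ := j) _ _ _ (by lia) (by lia) (by lia))

lemma HHmap_of {M N : ModuleCat.{u} R} {n i j : ℕ} (α : Abelian.Ext M N n)
    (hij : i + n = j) (k : ℕ) (x : Abelian.Ext (cyc R (maximalIdeal R ^ k)) M i) :
    HHmap R α hij (HHof R i M k x) = HHof R j N k (x.comp α hij) := by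
  simp only [HHmap, HHof]
  erw [Module.DirectLimit.map_apply_of]
  rfl

lemma HH_exists (i : ℕ) (M : ModuleCat.{u} R) (z : HH R i M) :
    ∃ k x, HHof R i M k x = z := Module.DirectLimit.exists_of z

lemma HHof_trans (i : ℕ) (M : ModuleCat.{u} R) (k l : ℕ) (hkl : k ≤ l)
    (x : Abelian.Ext (cyc R (maximalIdeal R ^ k)) M i) :
    HHof R i M l (extTrans R i M k l hkl x) = HHof R i M k x :=
  Module.DirectLimit.of_f

lemma HHof_zero (i : ℕ) (M : ModuleCat.{u} R) (k : ℕ)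
    (x : Abelian.Ext (cyc R (maximalIdeal R ^ k)) M i) (hx : HHof R i M k x = 0) :
    ∃ l, ∃ hkl : k ≤ l, extTrans R i M k l hkl x = 0 :=
  Module.DirectLimit.of.zero_exact hx

variable {S : ShortComplex (ModuleCat.{u} R)} (hS : S.ShortExact)

include hS in
lemma HH_exact₂ (i : ℕ) :
    Function.Exact (HHmap R (Abelian.Ext.mk₀ S.f) (add_zero i))
      (HHmap R (Abelian.Ext.mk₀ S.g) (add_zero i)) := by
  intro z
  constructor
  · intro hz
    obtain ⟨k, x, rfl⟩ := HH_exists R i _ z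
    rw [HHmap_of] at hz
    obtain ⟨l, hkl, hl⟩ := HHof_zero R _ _ _ _ hz
    rw [extTrans_apply, ← Abelian.Ext.comp_assoc (a₁₂ := i) _ _ _ (by lia) (by lia) (by lia),
      ← extTrans_apply R _ _ _ _ hkl] at hl
    obtain ⟨x₁, hx₁⟩ := Abelian.Ext.covariant_sequence_exact₂ _ hS _ hl
    refine ⟨HHof R i _ l x₁, ?_⟩
    rw [HHmap_of, hx₁, HHof_trans]
  · rintro ⟨y, rfl⟩
    obtain ⟨k, x, rfl⟩ := HH_exists R i _ y
    rw [HHmap_of, HHmap_of,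
      Abelian.Ext.comp_assoc (a₂₃ := 0) _ _ _ (by lia) (by lia) (by lia),
      Abelian.Ext.mk₀_comp_mk₀, S.zero]
    simp

lemma HH_exact₃ (i : ℕ) :
    Function.Exact (HHmap R (Abelian.Ext.mk₀ S.g) (add_zero i))
      (HHmap R hS.extClass (rfl : i + 1 = i + 1)) := by
  intro z
  constructor
  · intro hz
    obtain ⟨k, x, rfl⟩ := HH_exists R i _ z
    rw [HHmap_of] at hz
    obtain ⟨l, hkl, hl⟩ := HHof_zero R _ _ _ _ hz
    rw [extTrans_apply, ← Abelian.Ext.comp_assoc (a₁₂ := i) _ _ _ (by lia) (by lia) (by lia),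
      ← extTrans_apply R _ _ _ _ hkl] at hl
    obtain ⟨x₁, hx₁⟩ := Abelian.Ext.covariant_sequence_exact₃ _ hS _ rfl hl
    refine ⟨HHof R i _ l x₁, ?_⟩
    rw [HHmap_of, hx₁, HHof_trans]
  · rintro ⟨y, rfl⟩
    obtain ⟨k, x, rfl⟩ := HH_exists R i _ y
    rw [HHmap_of, HHmap_of,
      Abelian.Ext.comp_assoc (a₂₃ := 1) _ _ _ (by lia) (by lia) (by lia),
      hS.comp_extClass]
    simp

include hS in
lemma HH_inj₀ :
    Function.Injective (HHmap R (Abelian.Ext.mk₀ S.f) (add_zero 0)) := by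
  rw [injective_iff_map_eq_zero]
  intro z hz
  obtain ⟨k, x, rfl⟩ := HH_exists R 0 _ z
  rw [HHmap_of] at hz
  obtain ⟨l, hkl, hl⟩ := HHof_zero R _ _ _ _ hz
  rw [extTrans_apply, ← Abelian.Ext.comp_assoc (a₁₂ := 0) _ _ _ (by lia) (by lia) (by lia),
      ← extTrans_apply R _ _ _ _ hkl] at hl
  have := hS.mono_f
  have h0 := Abelian.Ext.postcomp_mk₀_injective_of_mono (cyc R (maximalIdeal R ^ l)) S.f
  rw [← HHof_trans R 0 _ k l hkl]
  have : extTrans R 0 S.X₁ k l hkl x = 0 := h0 (by simpa using hl)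
  rw [this, map_zero]

lemma length_le_add_of_exact_mid {A B C : Type u} [AddCommGroup A] [Module R A] [AddCommGroup B]
    [Module R B] [AddCommGroup C] [Module R C] (f : A →ₗ[R] B) (g : B →ₗ[R] C)
    (hfg : Function.Exact f g) :
    Module.length R B ≤ Module.length R A + Module.length R C := by
  rw [Module.length_eq_add_of_exact (LinearMap.ker g).subtype g.rangeRestrict
    Subtype.val_injective g.surjective_rangeRestrict (by
      intro x
      simp [Subtype.ext_iff])]
  gcongr
  · refine Module.length_le_of_surjective (f.codRestrict (LinearMap.ker g)
      (fun x => (hfg _).2 ⟨x, rfl⟩)) ?_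
    rintro ⟨x, hx⟩
    obtain ⟨y, hy⟩ := (hfg x).1 hx
    exact ⟨y, Subtype.ext hy⟩
  · exact Module.length_le_of_injective (LinearMap.range g).subtype Subtype.val_injective

lemma length_four {A B C D : Type u} [AddCommGroup A] [Module R A] [AddCommGroup B]
    [Module R B] [AddCommGroup C] [Module R C] [AddCommGroup D] [Module R D]
    (F : A →ₗ[R] B) (G : B →ₗ[R] C) (δ : C →ₗ[R] D) (h1 : Function.Injective F)
    (h2 : Function.Exact F G) (h3 : Function.Exact G δ) :
    Module.length R C + Module.length R A ≤ Module.length R B + Module.length R D := by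
  have e1 : Module.length R B = Module.length R A + Module.length R (LinearMap.range G) :=
    Module.length_eq_add_of_exact F G.rangeRestrict h1 G.surjective_rangeRestrict (by
      intro x
      rw [← h2 x]
      simp [Subtype.ext_iff])
  have e2 : Module.length R C ≤ Module.length R (LinearMap.range G) + Module.length R D :=
    length_le_add_of_exact_mid R (LinearMap.range G).subtype δ (by
      intro x
      rw [h3 x]
      simp)
  rw [e1]
  calc _ ≤ (Module.length R (LinearMap.range G) + Module.length R D) + Module.length R A := by
        gcongr
    _ = _ := by ring

/-- The length of local cohomology. -/
noncomputable def hl (i : ℕ) (M : Type u) [AddCommGroup M] [Module R M] : ℕ∞ :=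
  Module.length R (HH R i (ModuleCat.of R M))

section

variable {A B C : Type u} [AddCommGroup A] [Module R A] [AddCommGroup B]
    [Module R B] [AddCommGroup C] [Module R C] (f : A →ₗ[R] B) (g : B →ₗ[R] C)
    (hf : Function.Injective f) (hg : Function.Surjective g) (hfg : Function.Exact f g)

/-- The short complex of a pair of composable linear maps. -/
noncomputable def mkSC : ShortComplex (ModuleCat.{u} R) :=
  ShortComplex.mk (ModuleCat.ofHom f) (ModuleCat.ofHom g)
    (by ext x; exact hfg.apply_apply_eq_zero x)

include hf hg in
lemma mkSC_shortExact : (mkSC R f g hfg).ShortExact := by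
  refine ShortComplex.ShortExact.mk' ?_ ?_ ?_
  · rw [ShortComplex.moduleCat_exact_iff]
    exact fun x hx => (hfg x).1 hx
  · exact (ModuleCat.mono_iff_injective _).2 hf
  · exact (ModuleCat.epi_iff_surjective _).2 hg

include hf hg hfg in
lemma hl_quot_le (i : ℕ) : hl R i C ≤ hl R i B + hl R (i + 1) A :=
  length_le_add_of_exact_mid R _ _ (HH_exact₃ R (mkSC_shortExact R f g hf hg hfg) i)

include hf hg hfg in
lemma hl_zero_quot_le : hl R 0 C + hl R 0 A ≤ hl R 0 B + hl R 1 A := by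
  have key := length_four R _ _ _ (HH_inj₀ R (mkSC_shortExact R f g hf hg hfg))
    (HH_exact₂ R (mkSC_shortExact R f g hf hg hfg) 0)
    (HH_exact₃ R (mkSC_shortExact R f g hf hg hfg) 0)
  exact key

end

end LocalCohomologyModel

section TorsionVanishing

variable (R : Type u) [CommRing R]

lemma ext_step_exists {S : ShortComplex (ModuleCat.{u} R)} (hS : S.ShortExact)
    [Projective S.X₂] (N : ModuleCat.{u} R) (i : ℕ) (ξ : Abelian.Ext S.X₃ N (i + 1)) :
    ∃ η : Abelian.Ext S.X₁ N i, hS.extClass.comp η (add_comm 1 i) = ξ :=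
  Abelian.Ext.contravariant_sequence_exact₃ hS N ξ (Abelian.Ext.eq_zero_of_projective _)
    (add_comm 1 i)

lemma ext_step_zero {S S' : ShortComplex (ModuleCat.{u} R)} (hS : S.ShortExact)
    (hS' : S'.ShortExact) (φ : S' ⟶ S) (N : ModuleCat.{u} R) (i : ℕ)
    (η : Abelian.Ext S.X₁ N i) (h0 : (Abelian.Ext.mk₀ φ.τ₁).comp η (zero_add i) = 0) :
    (Abelian.Ext.mk₀ φ.τ₃).comp (hS.extClass.comp η (add_comm 1 i)) (zero_add (i + 1)) = 0 := by
  rw [← Abelian.Ext.comp_assoc (a₁₂ := 1) _ _ _ (by lia) (by lia) (by lia),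
    ← ShortComplex.ShortExact.extClass_naturality hS' hS φ,
    Abelian.Ext.comp_assoc (a₂₃ := i) _ _ _ (by lia) (by lia) (by lia), h0,
    Abelian.Ext.comp_zero]

variable [IsNoetherianRing R] [IsLocalRing R]

lemma ext_claim (J : Ideal R) (N : Type u) [AddCommGroup N] [Module R N] (c : ℕ)
    (hc : ∀ r ∈ J ^ c, ∀ x : N, r • x = 0) (i : ℕ) :
    ∀ (A : Type u) [AddCommGroup A] [Module R A] [Module.Finite R A]
      (ξ : Abelian.Ext (ModuleCat.of R A) (ModuleCat.of R N) i),
      ∃ n, ∀ (B : Type u) [AddCommGroup B] [Module R B] (φ : B →ₗ[R] A),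
        (∀ b, φ b ∈ J ^ n • (⊤ : Submodule R A)) →
        (Abelian.Ext.mk₀ (ModuleCat.ofHom φ)).comp ξ (zero_add i) = 0 := by
  induction i with
  | zero =>
    intro A _ _ _ ξ
    refine ⟨c, fun B _ _ φ hφ => ?_⟩
    obtain ⟨f, rfl⟩ := (Abelian.Ext.mk₀_bijective _ _).2 ξ
    rw [Abelian.Ext.mk₀_comp_mk₀]
    have : ModuleCat.ofHom φ ≫ f = 0 := by
      apply ModuleCat.hom_ext
      apply LinearMap.ext
      intro b
      change f.hom (φ b) = 0
      have key : J ^ c • (⊤ : Submodule R A) ≤ LinearMap.ker f.hom := by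
        rw [Submodule.smul_le]
        intro r hr x _
        rw [LinearMap.mem_ker, map_smul]
        exact hc r hr _
      exact key (hφ b)
    rw [this, Abelian.Ext.mk₀_zero]
  | succ i ih =>
    intro A _ _ _ ξ
    obtain ⟨r, g, hg⟩ := Module.Finite.exists_fin' R A
    have hex : Function.Exact (LinearMap.ker g).subtype g := by
      intro x; simp
    have hS := mkSC_shortExact R (LinearMap.ker g).subtype g Subtype.val_injective hg hex
    have : Projective (mkSC R (LinearMap.ker g).subtype g hex).X₂ :=
      (IsProjective.iff_projective (Fin r → R)).1 inferInstance
    obtain ⟨η, rfl⟩ := ext_step_exists R hS _ i ξ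
    obtain ⟨n, hn⟩ := ih (LinearMap.ker g) η
    obtain ⟨k, hk⟩ := Ideal.exists_pow_inf_eq_pow_smul J (LinearMap.ker g)
    refine ⟨n + k, fun B _ _ φ hφ => ?_⟩
    let F' : Submodule R ((Fin r → R) × B) :=
      (J ^ (n + k) • (⊤ : Submodule R (Fin r → R))).comap (LinearMap.fst R _ _) ⊓
        LinearMap.ker (g ∘ₗ LinearMap.fst R _ _ - φ ∘ₗ LinearMap.snd R _ _)
    have hF' : ∀ z : F', z.1.1 ∈ J ^ (n + k) • (⊤ : Submodule R (Fin r → R)) ∧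
        g z.1.1 = φ z.1.2 := by
      rintro ⟨z, h1, h2⟩
      refine ⟨h1, ?_⟩
      simpa [sub_eq_zero] using h2
    let g' : F' →ₗ[R] B := LinearMap.snd R _ _ ∘ₗ F'.subtype
    have hg' : Function.Surjective g' := by
      intro b
      have h1 := hφ b
      rw [← LinearMap.range_eq_top.2 hg, ← Submodule.map_top, ← Submodule.map_smul''] at h1
      obtain ⟨f, hf, hfb⟩ := h1
      refine ⟨⟨(f, b), hf, ?_⟩, rfl⟩
      simp [hfb]
    have hex' : Function.Exact (LinearMap.ker g').subtype g' := by
      intro x; simp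
    have hS' := mkSC_shortExact (A := LinearMap.ker g') (B := F') R
      (LinearMap.ker g').subtype g' Subtype.val_injective hg' hex'
    let u1 : LinearMap.ker g' →ₗ[R] LinearMap.ker g :=
      LinearMap.codRestrict _ (LinearMap.fst R _ _ ∘ₗ F'.subtype ∘ₗ (LinearMap.ker g').subtype)
        (by
          rintro ⟨z, hz⟩
          have hz' : z.1.2 = 0 := hz
          have := (hF' z).2
          rw [hz', map_zero] at this
          exact this)
    have h4 : ∀ b, u1 b ∈ J ^ n • (⊤ : Submodule R (LinearMap.ker g)) := by
      rintro ⟨z, hz⟩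
      have h1 : z.1.1 ∈ J ^ n • LinearMap.ker g := by
        have h2 : z.1.1 ∈ J ^ (n + k) • (⊤ : Submodule R (Fin r → R)) ⊓ LinearMap.ker g :=
          ⟨(hF' z).1, (u1 ⟨z, hz⟩).2⟩
        rw [hk (n + k) (by lia), Nat.add_sub_cancel] at h2
        exact Submodule.smul_mono le_rfl inf_le_right h2
      have h3 : J ^ n • LinearMap.ker g =
          (J ^ n • (⊤ : Submodule R (LinearMap.ker g))).map (LinearMap.ker g).subtype := by
        rw [Submodule.map_smul'', Submodule.map_top, Submodule.range_subtype]
      rw [h3] at h1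
      obtain ⟨y, hy, hyz⟩ := h1
      have : u1 ⟨z, hz⟩ = y := Subtype.ext hyz.symm
      rw [this]
      exact hy
    have h5 := hn (LinearMap.ker g') u1 h4
    let φS : mkSC (A := LinearMap.ker g') (B := F') R (LinearMap.ker g').subtype g' hex' ⟶
        mkSC R (LinearMap.ker g).subtype g hex :=
      { τ₁ := ModuleCat.ofHom u1
        τ₂ := ModuleCat.ofHom (LinearMap.fst R _ _ ∘ₗ F'.subtype)
        τ₃ := ModuleCat.ofHom φ
        comm₁₂ := rfl
        comm₂₃ := by
          apply ModuleCat.hom_ext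
          apply LinearMap.ext
          intro z
          exact (hF' z).2 }
    exact ext_step_zero R hS hS' φS _ i η h5

theorem hl_torsion (N : Type u) [AddCommGroup N] [Module R N] (c : ℕ)
    (hc : ∀ r ∈ maximalIdeal R ^ c, ∀ x : N, r • x = 0) (i : ℕ) : hl R (i + 1) N = 0 := by
  rw [hl, Module.length_eq_zero_iff]
  refine subsingleton_of_forall_eq 0 fun z => ?_
  obtain ⟨k, ξ, rfl⟩ := HH_exists R (i + 1) _ z
  have hex : ∀ J : Ideal R, Function.Exact (Submodule.subtype J) (Submodule.mkQ J) := by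
    intro J x
    rw [Submodule.mkQ_apply, Submodule.Quotient.mk_eq_zero]
    simp
  have hS : ∀ J : Ideal R, (mkSC R (Submodule.subtype J) (Submodule.mkQ J) (hex J)).ShortExact :=
    fun J => mkSC_shortExact R _ _ Subtype.val_injective (Submodule.mkQ_surjective J) (hex J)
  have : Projective (mkSC R _ _ (hex (maximalIdeal R ^ k))).X₂ :=
      (IsProjective.iff_projective R).1 inferInstance
  obtain ⟨η, hη⟩ := ext_step_exists R (hS (maximalIdeal R ^ k)) _ i ξ
  obtain ⟨n, hn⟩ := ext_claim R (maximalIdeal R) N c hc i _ η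
  rw [← HHof_trans R _ _ k (n + k) (by lia)]
  suffices key : extTrans R (i + 1) (ModuleCat.of R N) k (n + k) (by lia) ξ = 0 by
    rw [key, map_zero]
  rw [extTrans_apply]
  let φS : mkSC R _ _ (hex (maximalIdeal R ^ (n + k))) ⟶ mkSC R _ _ (hex (maximalIdeal R ^ k)) :=
    { τ₁ := ModuleCat.ofHom (Submodule.inclusion (Ideal.pow_le_pow_right (by lia)))
      τ₂ := 𝟙 _
      τ₃ := cycMap R (Ideal.pow_le_pow_right (by lia))
      comm₁₂ := rfl
      comm₂₃ := rfl }
  have := ext_step_zero R (hS (maximalIdeal R ^ k)) (hS (maximalIdeal R ^ (n + k))) φS _ i η ?_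
  · rw [hη] at this
    exact this
  refine hn _ _ ?_
  intro b
  have h1 : b.1 ∈ maximalIdeal R ^ n • (maximalIdeal R ^ k : Submodule R R) := by
    have h0 : ∀ y ∈ maximalIdeal R ^ (n + k), y ∈ maximalIdeal R ^ n • maximalIdeal R ^ k := by
      intro y hy
      rw [pow_add] at hy
      exact hy
    exact h0 _ b.2
  have h3 : maximalIdeal R ^ n • (maximalIdeal R ^ k : Submodule R R) =
        (maximalIdeal R ^ n • (⊤ : Submodule R (maximalIdeal R ^ k : Submodule R R))).map
          (Submodule.subtype (maximalIdeal R ^ k : Submodule R R)) := by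
      rw [Submodule.map_smul'', Submodule.map_top, Submodule.range_subtype]
  rw [h3] at h1
  obtain ⟨y, hy, hyz⟩ := h1
  have h4 : Submodule.inclusion (Ideal.pow_le_pow_right (I := maximalIdeal R)
    (show k ≤ n + k by lia)) b = y := Subtype.ext hyz.symm
  rw [h4]
  exact hy

end TorsionVanishing

section HZero

variable (R : Type u) [CommRing R] [IsLocalRing R] (M : Type u) [AddCommGroup M] [Module R M]

lemma mem_H0 (x : M) : x ∈ H0 R M ↔ ∃ n, ∀ r ∈ maximalIdeal R ^ n, r • x = 0 := by
  rw [H0, Submodule.mem_iSup_of_directed]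
  · simp [Submodule.mem_torsionBySet_iff]
  · intro a b
    refine ⟨max a b, ?_, ?_⟩
    · exact Submodule.torsionBySet_le_torsionBySet_of_subset
        (Ideal.pow_le_pow_right (le_max_left _ _))
    · exact Submodule.torsionBySet_le_torsionBySet_of_subset
        (Ideal.pow_le_pow_right (le_max_right _ _))

/-- Evaluation at one. -/
noncomputable def evOne (k : ℕ) :
    Abelian.Ext (cyc R (maximalIdeal R ^ k)) (ModuleCat.of R M) 0 →ₗ[R] M where
  toFun x := (Abelian.Ext.linearEquiv₀ (R := R) x).hom (Submodule.Quotient.mk (1 : R))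
  map_add' x y := by rw [map_add]; rfl
  map_smul' r x := by rw [map_smul]; rfl

lemma evOne_mk₀ (k : ℕ) (f : cyc R (maximalIdeal R ^ k) ⟶ ModuleCat.of R M) :
    evOne R M k (Abelian.Ext.mk₀ f) = f.hom (Submodule.Quotient.mk (1 : R)) := by
  change (Abelian.Ext.linearEquiv₀ (R := R) (Abelian.Ext.mk₀ f)).hom _ = _
  congr 2
  exact Abelian.Ext.homEquiv₀.apply_symm_apply f

/-- Evaluation at one on the limit. -/
noncomputable def evLim : HH R 0 (ModuleCat.of R M) →ₗ[R] M :=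
  Module.DirectLimit.lift R ℕ _ _ (evOne R M) (by
    intro k l hkl x
    obtain ⟨f, rfl⟩ := (Abelian.Ext.mk₀_bijective _ _).2 x
    rw [extTrans_apply, Abelian.Ext.mk₀_comp_mk₀, evOne_mk₀, evOne_mk₀]
    rfl)

lemma evLim_of (k : ℕ) (f : cyc R (maximalIdeal R ^ k) ⟶ ModuleCat.of R M) :
    evLim R M (HHof R 0 _ k (Abelian.Ext.mk₀ f)) = f.hom (Submodule.Quotient.mk (1 : R)) := by
  rw [← evOne_mk₀]
  exact Module.DirectLimit.lift_of _ _ _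

lemma evLim_injective : Function.Injective (evLim R M) := by
  rw [injective_iff_map_eq_zero]
  intro z hz
  obtain ⟨k, x, rfl⟩ := HH_exists R 0 _ z
  obtain ⟨f, rfl⟩ := (Abelian.Ext.mk₀_bijective _ _).2 x
  rw [evLim_of] at hz
  have : f = 0 := by
    apply ModuleCat.hom_ext
    apply LinearMap.ext
    intro y
    obtain ⟨y, rfl⟩ := Submodule.Quotient.mk_surjective _ y
    have : (Submodule.Quotient.mk y : R ⧸ maximalIdeal R ^ k) =
        y • Submodule.Quotient.mk (1 : R) := by
      rw [← Submodule.Quotient.mk_smul, smul_eq_mul, mul_one]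
    rw [this]
    erw [map_smul, hz]
    simp
  rw [this, Abelian.Ext.mk₀_zero, map_zero]

lemma evLim_range : LinearMap.range (evLim R M) = H0 R M := by
  ext x
  rw [mem_H0]
  constructor
  · rintro ⟨z, rfl⟩
    obtain ⟨k, x, rfl⟩ := HH_exists R 0 _ z
    obtain ⟨f, rfl⟩ := (Abelian.Ext.mk₀_bijective _ _).2 x
    refine ⟨k, fun r hr => ?_⟩
    rw [evLim_of]
    have : r • (Submodule.Quotient.mk (1 : R) : R ⧸ maximalIdeal R ^ k) = 0 := by
      rw [← Submodule.Quotient.mk_smul, smul_eq_mul, mul_one]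
      exact (Submodule.Quotient.mk_eq_zero _).2 hr
    have h2 := congrArg f.hom this
    rw [map_zero] at h2
    erw [map_smul] at h2
    exact h2
  · rintro ⟨n, hn⟩
    refine ⟨HHof R 0 _ n (Abelian.Ext.mk₀ (ModuleCat.ofHom (Submodule.liftQ (maximalIdeal R ^ n)
      (LinearMap.toSpanSingleton R M x) ?_))), ?_⟩
    · intro r hr
      simpa using hn r hr
    · rw [evLim_of]
      change (LinearMap.toSpanSingleton R M x) 1 = x
      simp

theorem hl_zero_eq : hl R 0 M = Module.length R (H0 R M) := by
  rw [hl, ← evLim_range]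
  exact (LinearEquiv.ofInjective _ (evLim_injective R M)).length_eq

end HZero

section OldExt

lemma extMk_zero_iff {C : Type*} [Category C] [Abelian C] [HasExt.{u} C] {X Y : C}
    (P : ProjectiveResolution X) (n : ℕ) (f : P.complex.X n ⟶ Y)
    (hf : P.complex.d (n + 1) n ≫ f = 0) :
    P.extMk f (n + 1) rfl hf = 0 ↔ ∃ g, P.complex.d n ((ComplexShape.down ℕ).next n) ≫ g = f := by
  rcases n with _ | n
  · have h1 : P.complex.d 0 ((ComplexShape.down ℕ).next 0) = 0 :=
      P.complex.shape _ _ (by simp)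
    rw [h1]
    simp only [Limits.zero_comp]
    constructor
    · intro h
      simp only [← P.extEquivCohomologyClass.apply_eq_iff_eq,
        ProjectiveResolution.extEquivCohomologyClass_extMk,
        ProjectiveResolution.extEquivCohomologyClass_zero,
        CochainComplex.HomComplex.CohomologyClass.mk_eq_zero_iff] at h
      rw [CochainComplex.HomComplex.Cocycle.toSingleMk_mem_coboundaries_iff _ _ _ _ _ 1
        (by simp)] at h
      obtain ⟨g, hg⟩ := h
      refine ⟨0, ?_⟩
      have h0 : P.cochainComplex.d (-((0 : ℕ) : ℤ)) 1 = 0 := by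
        apply Limits.IsZero.eq_of_tgt
        exact P.cochainComplex.isZero_of_isStrictlyLE 0 1
      rw [h0, Limits.zero_comp] at hg
      rw [← cancel_epi (P.cochainComplexXIso (-((0 : ℕ) : ℤ)) 0 rfl).hom, ← hg, Limits.comp_zero]
    · rintro ⟨g, rfl⟩
      simp
  · have h1 : (ComplexShape.down ℕ).next (n + 1) = n := (ComplexShape.down ℕ).next_eq' (by simp)
    rw [h1]
    exact P.extMk_eq_zero_iff f _ _ hf n rfl

end OldExt

section OldExtCompare

variable (R : Type u) [CommRing R]

/-- The functor whose left derived functors give the old `Ext`. -/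
noncomputable abbrev yonF (Y : ModuleCat.{u} R) : ModuleCat.{u} R ⥤ (ModuleCat.{u} R)ᵒᵖ :=
  ((linearYoneda R (ModuleCat.{u} R)).obj Y).rightOp

/-- The complex `Hom(P, Y)` in the opposite category. -/
noncomputable abbrev KK {X : ModuleCat.{u} R} (P : ProjectiveResolution X) (Y : ModuleCat.{u} R) :
    ChainComplex (ModuleCat.{u} R)ᵒᵖ ℕ :=
  ((yonF R Y).mapHomologicalComplex _).obj P.complex

variable {X : ModuleCat.{u} R} (P : ProjectiveResolution X) (Y : ModuleCat.{u} R) (n : ℕ)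

/-- The module of cocycles. -/
noncomputable abbrev ZZ : ModuleCat.{u} R := ((KK R P Y).opcycles n).unop

/-- The old Ext. -/
noncomputable abbrev oldExt (X Y : ModuleCat.{u} R) (n : ℕ) : ModuleCat.{u} R :=
  ((Ext R (ModuleCat.{u} R) n).obj (Opposite.op X)).obj Y

/-- the cocycle. -/
noncomputable def zcoc : ZZ R P Y n →ₗ[R] (P.complex.X n ⟶ Y) :=
  ((KK R P Y).pOpcycles n).unop.hom

lemma zcoc_d (z : ZZ R P Y n) : P.complex.d (n + 1) n ≫ zcoc R P Y n z = 0 := by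
  have h := (KK R P Y).d_pOpcycles (n + 1) n
  have h2 := congrArg (fun t => t.unop.hom z) h
  exact h2

lemma zcoc_injective : Function.Injective (zcoc R P Y n) := by
  have : Mono ((KK R P Y).pOpcycles n).unop := inferInstance
  exact (ModuleCat.mono_iff_injective _).1 this

lemma zcoc_exists (f : P.complex.X n ⟶ Y) (hf : P.complex.d (n + 1) n ≫ f = 0) :
    ∃ z, zcoc R P Y n z = f := by
  let j : ModuleCat.of R R ⟶ ((KK R P Y).X n).unop :=
    ModuleCat.ofHom (LinearMap.toSpanSingleton R (P.complex.X n ⟶ Y) f)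
  have hj : (KK R P Y).d (n + 1) n ≫ j.op = 0 := by
    apply Quiver.Hom.unop_inj
    apply ModuleCat.hom_ext
    apply LinearMap.ext
    intro (r : R)
    change P.complex.d (n + 1) n ≫ (r • f) = 0
    rw [Linear.comp_smul, hf, smul_zero]
  have h := (KK R P Y).p_descOpcycles j.op (n + 1) (by simp) hj
  refine ⟨((KK R P Y).descOpcycles j.op (n + 1) (by simp) hj).unop.hom (1 : R), ?_⟩
  have h2 := congrArg (fun t => t.unop.hom (1 : R)) h
  refine Eq.trans h2 ?_
  change (1 : R) • f = f
  rw [one_smul]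

/-- The derived functor is computed by a resolution. -/
noncomputable def ldIso : ((yonF R Y).leftDerived n).obj X ≅ (KK R P Y).homology n :=
  P.isoLeftDerivedObj (yonF R Y) n

lemma ldIso_natural {X' : ModuleCat.{u} R} (P' : ProjectiveResolution X') (g : X' ⟶ X)
    (φ : ProjectiveResolution.Hom P' P g) :
    ((yonF R Y).leftDerived n).map g ≫ (ldIso R P Y n).hom =
      (ldIso R P' Y n).hom ≫ HomologicalComplex.homologyMap
        (show KK R P' Y ⟶ KK R P Y from ((yonF R Y).mapHomologicalComplex _).map φ.hom) n :=
  ProjectiveResolution.isoLeftDerivedObj_hom_naturality g P' P φ.hom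
        φ.hom_f_zero_comp_π_f_zero (yonF R Y) n

/-- The class in the old Ext. -/
noncomputable def zold : ZZ R P Y n →ₗ[R] oldExt R X Y n :=
  ((ldIso R P Y n).hom ≫ (KK R P Y).homologyι n).unop.hom

lemma zold_surjective : Function.Surjective (zold R P Y n) := by
  have : Mono ((ldIso R P Y n).hom ≫ (KK R P Y).homologyι n) := by
    apply mono_comp
  have : Epi ((ldIso R P Y n).hom ≫ (KK R P Y).homologyι n).unop :=
    inferInstance
  exact (ModuleCat.epi_iff_surjective _).1 this

lemma zold_eq_zero_iff (z : ZZ R P Y n) :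
    zold R P Y n z = 0 ↔
      ∃ g, P.complex.d n ((ComplexShape.down ℕ).next n) ≫ g = zcoc R P Y n z := by
  set j := (ComplexShape.down ℕ).next n with hj
  let S : ShortComplex (ModuleCat.{u} R)ᵒᵖ := ShortComplex.mk
    ((ldIso R P Y n).hom ≫ (KK R P Y).homologyι n)
    ((KK R P Y).fromOpcycles n j) (by simp)
  have hS : S.Exact := by
    have h1 : (ShortComplex.mk _ _ ((KK R P Y).homologyι_comp_fromOpcycles n j)).Exact :=
      ShortComplex.exact_of_f_is_kernel _ ((KK R P Y).homologyIsKernel n j hj.symm)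
    refine (ShortComplex.exact_iff_of_iso ?_).2 h1
    exact ShortComplex.isoMk (ldIso R P Y n) (Iso.refl _) (Iso.refl _)
      (by simp [S]) (by simp [S])
  have hS' := hS.unop
  rw [ShortComplex.moduleCat_exact_iff] at hS'
  have hp := (KK R P Y).p_fromOpcycles n j
  have hp' : ∀ g : P.complex.X j ⟶ Y, zcoc R P Y n (((KK R P Y).fromOpcycles n j).unop.hom g) =
    P.complex.d n j ≫ g := fun g => congrArg (fun t => t.unop.hom g) hp
  constructor
  · intro hz
    obtain ⟨g, hg⟩ := hS' z hz
    refine ⟨g, ?_⟩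
    refine (hp' g).symm.trans ?_
    exact congrArg _ hg
  · rintro ⟨g, hg⟩
    rw [← hp'] at hg
    have := zcoc_injective R P Y n hg
    rw [← this]
    have h3 := congrArg (fun t => t.unop.hom g) S.zero
    exact h3

/-- The class in the new Ext. -/
noncomputable def znew : ZZ R P Y n →ₗ[R] Abelian.Ext X Y n where
  toFun z := P.extMk (zcoc R P Y n z) (n + 1) rfl (zcoc_d R P Y n z)
  map_add' x y := by
    rw [P.add_extMk]
    simp only [map_add]
  map_smul' r x := by
    rw [RingHom.id_apply, Abelian.Ext.smul_eq_comp_mk₀, P.extMk_comp_mk₀]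
    congr 1
    rw [map_smul]
    simp

lemma znew_surjective : Function.Surjective (znew R P Y n) := by
  intro ξ
  obtain ⟨f, hf, rfl⟩ := P.extMk_surjective ξ (n + 1) rfl
  obtain ⟨z, rfl⟩ := zcoc_exists R P Y n f hf
  exact ⟨z, rfl⟩

lemma ker_zold_eq : LinearMap.ker (zold R P Y n) = LinearMap.ker (znew R P Y n) := by
  ext z
  rw [LinearMap.mem_ker, LinearMap.mem_ker, zold_eq_zero_iff]
  exact (extMk_zero_iff P n _ (zcoc_d R P Y n z)).symm

/-- The comparison. -/
noncomputable def extComp : oldExt R X Y n ≃ₗ[R] Abelian.Ext X Y n :=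
  ((zold R P Y n).quotKerEquivOfSurjective (zold_surjective R P Y n)).symm.trans
    ((Submodule.quotEquivOfEq _ _ (ker_zold_eq R P Y n)).trans
      ((znew R P Y n).quotKerEquivOfSurjective (znew_surjective R P Y n)))

lemma extComp_zold (z : ZZ R P Y n) : extComp R P Y n (zold R P Y n z) = znew R P Y n z := by
  have h : ((zold R P Y n).quotKerEquivOfSurjective (zold_surjective R P Y n)).symm
      (zold R P Y n z) = Submodule.Quotient.mk z := by
    rw [LinearEquiv.symm_apply_eq]
    rfl
  simp only [extComp, LinearEquiv.trans_apply]
  rw [h]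
  rfl

lemma extComp_natural {X' : ModuleCat.{u} R} (P' : ProjectiveResolution X') (g : X' ⟶ X)
    (w : oldExt R X Y n) :
    extComp R P' Y n ((((Ext R (ModuleCat.{u} R) n).map g.op).app Y).hom w) =
      (Abelian.Ext.mk₀ g).comp (extComp R P Y n w) (zero_add n) := by
  obtain ⟨z, rfl⟩ := zold_surjective R P Y n w
  rw [extComp_zold]
  let φ : ProjectiveResolution.Hom P' P g :=
    { hom := ProjectiveResolution.lift g P' P
      hom_f_zero_comp_π_f_zero := by
        have h0 := ProjectiveResolution.lift_commutes_zero g P' P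
        exact h0 }
  let ψ : KK R P' Y ⟶ KK R P Y := ((yonF R Y).mapHomologicalComplex _).map φ.hom
  let z' : ZZ R P' Y n := (HomologicalComplex.opcyclesMap ψ n).unop.hom z
  have h1 : zcoc R P' Y n z' = φ.hom.f n ≫ zcoc R P Y n z :=
    congrArg (fun t => t.unop.hom z) (HomologicalComplex.p_opcyclesMap ψ n)
  have h2 : (((Ext R (ModuleCat.{u} R) n).map g.op).app Y).hom (zold R P Y n z) =
      zold R P' Y n z' := by
    have h3 : ((yonF R Y).leftDerived n).map g ≫ ((ldIso R P Y n).hom ≫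
        (KK R P Y).homologyι n) = ((ldIso R P' Y n).hom ≫
        (KK R P' Y).homologyι n) ≫ HomologicalComplex.opcyclesMap ψ n := by
      have h4 := ldIso_natural R P Y n P' g φ
      rw [← Category.assoc, h4, Category.assoc, Category.assoc]
      congr 1
      exact HomologicalComplex.homologyι_naturality ψ n
    exact congrArg (fun t => t.unop.hom z) h3
  refine (congrArg _ h2).trans ?_
  rw [extComp_zold]
  change P'.extMk _ (n + 1) rfl (zcoc_d R P' Y n z') =
    (Abelian.Ext.mk₀ g).comp (P.extMk _ (n + 1) rfl (zcoc_d R P Y n z)) (zero_add n)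
  rw [ProjectiveResolution.mk₀_comp_extMk _ _ _ _ φ]
  congr 1

end OldExtCompare

section CompareColimit

variable (R : Type u) [CommRing R] [IsLocalRing R]

/-- The resolution used in the comparison. -/
noncomputable abbrev resOf (X : ModuleCat.{u} R) : ProjectiveResolution X :=
  projectiveResolution X

/-- The diagram evaluated at a module. -/
noncomputable abbrev dEval (i : ℕ) (M : ModuleCat.{u} R) : (ℕᵒᵖ)ᵒᵖ ⥤ ModuleCat.{u} R :=
  localCohomology.diagram (localCohomology.idealPowersDiagram (maximalIdeal R)) i ⋙
    (evaluation _ _).obj M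

/-- The comparison at a finite level. -/
noncomputable def dComp (i : ℕ) (M : ModuleCat.{u} R) (k : (ℕᵒᵖ)ᵒᵖ) :
    (dEval R i M).obj k ≃ₗ[R] Abelian.Ext (cyc R (maximalIdeal R ^ k.unop.unop)) M i :=
  extComp R (resOf R (cyc R (maximalIdeal R ^ k.unop.unop))) M i

lemma dComp_natural (i : ℕ) (M : ModuleCat.{u} R) (k l : (ℕᵒᵖ)ᵒᵖ) (f : k ⟶ l)
    (x : (dEval R i M).obj k) :
    dComp R i M l (((dEval R i M).map f).hom x) =
      extTrans R i M k.unop.unop l.unop.unop f.unop.unop.down.down (dComp R i M k x) :=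
  extComp_natural R (resOf R (cyc R (maximalIdeal R ^ k.unop.unop))) M i
    (resOf R (cyc R (maximalIdeal R ^ l.unop.unop))) (cycMap R
      (Ideal.pow_le_pow_right f.unop.unop.down.down)) x

/-- The cocone with point the model. -/
noncomputable def dCocone (i : ℕ) (M : ModuleCat.{u} R) : Limits.Cocone (dEval R i M) where
  pt := ModuleCat.of R (HH R i M)
  ι :=
    { app := fun k => ModuleCat.ofHom (HHof R i M k.unop.unop ∘ₗ (dComp R i M k).toLinearMap)
      naturality := by
        intro k l f
        apply ModuleCat.hom_ext
        apply LinearMap.ext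
        intro x
        change HHof R i M _ (dComp R i M l (((dEval R i M).map f).hom x)) =
          HHof R i M _ (dComp R i M k x)
        rw [dComp_natural, HHof_trans] }

/-- The colimit cocone of the definition. -/
noncomputable def dColim (i : ℕ) (M : ModuleCat.{u} R) : Limits.Cocone (dEval R i M) :=
  ((evaluation _ _).obj M).mapCocone (Limits.colimit.cocone
    (localCohomology.diagram (localCohomology.idealPowersDiagram (maximalIdeal R)) i))

noncomputable def dIsColim (i : ℕ) (M : ModuleCat.{u} R) : Limits.IsColimit (dColim R i M) :=
  Limits.isColimitOfPreserves _ (Limits.colimit.isColimit _)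

theorem lcoh_length (i : ℕ) (M : Type u) [AddCommGroup M] [Module R M] :
    Module.length R (lcoh R i M) = hl R i M := by
  let M' := ModuleCat.of R M
  let T := ((dIsColim R i M').desc (dCocone R i M')).hom
  have hT : ∀ k x, T (((dColim R i M').ι.app k).hom x) = HHof R i M' _ (dComp R i M' k x) := by
    intro k x
    exact congrArg (fun t => t.hom x) ((dIsColim R i M').fac (dCocone R i M') k)
  have hF : IsFiltered (ℕᵒᵖ)ᵒᵖ := inferInstance
  have hP0 : Limits.PreservesFilteredColimitsOfSize.{0, 0} (forget (ModuleCat.{u} R)) :=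
    Limits.preservesFilteredColimitsOfSize_shrink.{0, u, 0, u} _
  have hP : Limits.PreservesColimit (dEval R i M') (forget (ModuleCat.{u} R)) :=
    (hP0.preserves_filtered_colimits (ℕᵒᵖ)ᵒᵖ).preservesColimit
  have hrep : ∀ z : (dColim R i M').pt, ∃ k x, ((dColim R i M').ι.app k).hom x = z :=
    fun z => Limits.Concrete.isColimit_exists_rep (dEval R i M') (dIsColim R i M') z
  have hbij : Function.Bijective T := by
    constructor
    · rw [injective_iff_map_eq_zero]
      intro z hz
      obtain ⟨k, x, rfl⟩ := hrep z
      rw [hT] at hz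
      obtain ⟨l, hkl, hl⟩ := HHof_zero R _ _ _ _ hz
      let f : k ⟶ Opposite.op (Opposite.op l) := (homOfLE hkl).op.op
      have h1 := dComp_natural R i M' k _ f x
      have h2 : dComp R i M' _ (((dEval R i M').map f).hom x) = 0 := h1.trans hl
      rw [LinearEquiv.map_eq_zero_iff] at h2
      have h3 := congrArg (fun t => t.hom x) ((dColim R i M').w f)
      refine h3.symm.trans ?_
      exact (congrArg _ h2).trans (map_zero ((dColim R i M').ι.app _).hom)
    · intro z
      obtain ⟨k, x, rfl⟩ := HH_exists R i _ z
      refine ⟨((dColim R i M').ι.app (Opposite.op (Opposite.op k))).hom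
        ((dComp R i M' (Opposite.op (Opposite.op k))).symm x), ?_⟩
      rw [hT, LinearEquiv.apply_symm_apply]
  exact (LinearEquiv.ofBijective T hbij).length_eq

theorem lcoh_mlen (i : ℕ) (M : Type u) [AddCommGroup M] [Module R M] :
    mlen R (lcoh R i M) = ((hl R i M : ℕ∞) : WithBot ℕ∞) := by
  rw [← lcoh_length, Module.coe_length]
  rfl

end CompareColimit

section CommAlg

variable (R : Type u) [CommRing R] [IsLocalRing R] [IsNoetherianRing R]
variable {M : Type u} [AddCommGroup M] [Module R M]

theorem pow_smul_eq_bot_of_length_le (k : ℕ) : ∀ (N : Submodule R M), N.FG →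
    Module.length R N ≤ k → maximalIdeal R ^ k • N = ⊥ := by
  induction k with
  | zero =>
    intro N hN h
    have h0 : Module.length R N = 0 := by simpa using h
    rw [Module.length_eq_zero_iff] at h0
    have : N = ⊥ := (Submodule.subsingleton_iff_eq_bot).1 h0
    simp [this]
  | succ k ih =>
    intro N hN h
    by_cases hb : N = ⊥
    · simp [hb]
    have hlt : maximalIdeal R • N < N := by
      refine lt_of_le_of_ne Submodule.smul_le_right ?_
      intro he
      exact hb (Submodule.eq_bot_of_le_smul_of_le_jacobson_bot _ N hN he.ge
        (IsLocalRing.maximalIdeal_le_jacobson _))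
    have h1 : Module.length R (maximalIdeal R • N : Submodule R M) < Module.length R N := by
      rw [Module.length_submodule, Module.length_submodule]
      apply Order.height_strictMono hlt
      rw [Module.length_submodule] at h
      exact lt_of_le_of_lt ((Order.height_mono hlt.le).trans h) (by exact_mod_cast ENat.coe_lt_top (k+1))
    have h2 := ih (maximalIdeal R • N) (Submodule.FG.smul (IsNoetherian.noetherian _) hN) (by
      have : Module.length R (maximalIdeal R • N : Submodule R M) < (k : ℕ∞) + 1 := lt_of_lt_of_le h1 (by exact_mod_cast h)
      exact Order.le_of_lt_add_one this)
    rw [pow_succ, Submodule.mul_smul, h2]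

theorem H0_pow [Module.Finite R M] : ∃ c, ∀ r ∈ maximalIdeal R ^ c, ∀ x ∈ H0 R M, r • x = 0 := by
  obtain ⟨s, hs⟩ : (H0 R M).FG := IsNoetherian.noetherian _
  have h1 : ∀ x ∈ s, ∃ n, ∀ r ∈ maximalIdeal R ^ n, r • x = 0 := fun x hx =>
    (mem_H0 R M x).1 (hs ▸ Submodule.subset_span hx)
  choose! f hf using h1
  refine ⟨s.sup f, fun r hr x hx => ?_⟩
  rw [← hs] at hx
  induction hx using Submodule.span_induction with
  | mem x hx => exact hf x hx r (Ideal.pow_le_pow_right (Finset.le_sup hx) hr)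
  | zero => simp
  | add x y _ _ hx hy => rw [smul_add, hx, hy, add_zero]
  | smul a x _ hx => rw [smul_comm, hx, smul_zero]

theorem hl_quot_torsion_le (N : Submodule R M) (c : ℕ)
    (hc : ∀ r ∈ maximalIdeal R ^ c, ∀ x ∈ N, r • x = 0) (i : ℕ) : hl R i (M ⧸ N) ≤ hl R i M := by
  have := hl_quot_le R N.subtype N.mkQ N.subtype_injective N.mkQ_surjective
    (LinearMap.exact_subtype_mkQ N) i
  rw [hl_torsion R N c (fun r hr x => Subtype.ext (hc r hr x x.2)) i] at this
  simpa using this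

theorem hl_surj_torsion_le {P : Type u} [AddCommGroup P] [Module R P] (g : M →ₗ[R] P)
    (hg : Function.Surjective g) (c : ℕ)
    (hc : ∀ r ∈ maximalIdeal R ^ c, ∀ x, g x = 0 → r • x = 0) (i : ℕ) : hl R i P ≤ hl R i M := by
  have := hl_quot_le R (LinearMap.ker g).subtype g (Submodule.subtype_injective _) hg
    (LinearMap.exact_subtype_ker_map g) i
  rw [hl_torsion R _ c (fun r hr x => Subtype.ext (hc r hr x x.2)) i] at this
  simpa using this

theorem hl_equiv {P : Type u} [AddCommGroup P] [Module R P] (e : M ≃ₗ[R] P) (i : ℕ) :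
    hl R i M = hl R i P := by
  apply le_antisymm
  · exact hl_surj_torsion_le R e.symm.toLinearMap e.symm.surjective 0
      (fun r _ x hx => by
        have : x = 0 := by simpa using hx
        simp [this]) i
  · exact hl_surj_torsion_le R e.toLinearMap e.surjective 0
      (fun r _ x hx => by
        have : x = 0 := by simpa using hx
        simp [this]) i

theorem H0_quot_H0 [Module.Finite R M] : H0 R (M ⧸ H0 R M) = ⊥ := by
  obtain ⟨c, hc⟩ := H0_pow R (M := M)
  rw [eq_bot_iff]
  intro x hx
  obtain ⟨n, hn⟩ := (mem_H0 R _ x).1 hx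
  obtain ⟨y, rfl⟩ := Submodule.mkQ_surjective _ x
  rw [Submodule.mem_bot, Submodule.mkQ_apply, Submodule.Quotient.mk_eq_zero, mem_H0]
  refine ⟨c + n, fun r hr => ?_⟩
  rw [pow_add] at hr
  refine Submodule.mul_induction_on hr ?_ ?_
  · intro a ha b hb
    rw [mul_smul]
    apply hc a ha
    rw [← Submodule.Quotient.mk_eq_zero]
    exact hn b hb
  · intro a b ha hb
    rw [add_smul, ha, hb, add_zero]

theorem exists_regular_of_H0 [Module.Finite R M] (h : H0 R M = ⊥) :
    ∃ x ∈ maximalIdeal R, IsSMulRegular M x := by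
  have : Subsingleton ((R ⧸ maximalIdeal R) →ₗ[R] M) := by
    constructor
    intro f g
    have key : ∀ f : (R ⧸ maximalIdeal R) →ₗ[R] M, f = 0 := by
      intro f
      have h1 : f (Ideal.Quotient.mk _ 1) ∈ H0 R M := by
        rw [mem_H0]
        refine ⟨1, fun r hr => ?_⟩
        rw [pow_one] at hr
        rw [← map_smul]
        have : r • (Ideal.Quotient.mk (maximalIdeal R) 1) = 0 := by
          rw [← Ideal.Quotient.mk_eq_mk, ← Submodule.Quotient.mk_smul, Submodule.Quotient.mk_eq_zero]
          simpa using hr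
        rw [this, map_zero]
      rw [h, Submodule.mem_bot] at h1
      ext
      simpa using h1
    rw [key f, key g]
  obtain ⟨r, hr, hreg⟩ := IsSMulRegular.subsingleton_linearMap_iff.1 this
  rw [Ideal.annihilator_quotient] at hr
  exact ⟨r, hr, hreg⟩

theorem le_H0_of_supportDim_le_zero [Module.Finite R M] (N : Submodule R M)
    (h : Module.supportDim R N ≤ 0) : N ≤ H0 R M := by
  by_cases hs : Subsingleton N
  · rw [Submodule.subsingleton_iff_eq_bot.1 hs]; exact bot_le
  have h0 : Module.supportDim R N = 0 := by
    refine le_antisymm h ?_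
    have h1 : Module.supportDim R N ≠ ⊥ := fun hb =>
      hs ((Module.supportDim_eq_bot_iff_subsingleton _ _).1 hb)
    obtain ⟨k, hk⟩ := WithBot.ne_bot_iff_exists.1 h1
    rw [← hk]
    exact_mod_cast zero_le
  have h2 := support_of_supportDim_eq_zero (R := R) (N := N) h0
  rw [Module.support_eq_zeroLocus] at h2
  have h3 := congrArg PrimeSpectrum.vanishingIdeal h2
  rw [PrimeSpectrum.vanishingIdeal_zeroLocus_eq_radical,
    PrimeSpectrum.vanishingIdeal_zeroLocus_eq_radical,
    Ideal.IsPrime.radical (IsLocalRing.maximalIdeal.isMaximal R).isPrime] at h3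
  obtain ⟨n, hn⟩ := Ideal.exists_pow_le_of_le_radical_of_fg h3.ge (IsNoetherian.noetherian _)
  intro x hx
  rw [mem_H0]
  refine ⟨n, fun r hr => ?_⟩
  have := Module.mem_annihilator.1 (hn hr) ⟨x, hx⟩
  exact congrArg Subtype.val this

end CommAlg

section LemmaQ

open scoped Pointwise

variable (R : Type u) [CommRing R] [IsLocalRing R] [IsNoetherianRing R]

theorem wb_le_of_lt {t : WithBot ℕ∞} {n : ℕ} (h : t < ((n + 1 : ℕ) : ℕ∞)) : t ≤ (n : ℕ∞) := by
  induction t using WithBot.recBotCoe with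
  | bot => exact bot_le
  | coe t =>
    have h1 : t < (n : ℕ∞) + 1 := by exact_mod_cast h
    have h2 : t ≤ (n : ℕ∞) := Order.le_of_lt_add_one h1
    exact_mod_cast h2

theorem lemmaQ (d : ℕ) : ∀ (M : Type u) [AddCommGroup M] [Module R M] [Module.Finite R M],
    (∀ i < d, hl R i M < ⊤) → ∀ N : Submodule R M, Module.supportDim R N < (d : ℕ∞) →
      N ≤ H0 R M := by
  induction d with
  | zero =>
    intro M _ _ _ _ N hN
    exact le_H0_of_supportDim_le_zero R N (by exact_mod_cast hN.le)
  | succ d ih =>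
    intro M _ _ _ hM N hN
    rcases Nat.eq_zero_or_pos d with rfl | hd
    · apply le_H0_of_supportDim_le_zero R N
      exact_mod_cast wb_le_of_lt hN
    have step : ∀ (P : Type u) [AddCommGroup P] [Module R P] [Module.Finite R P], H0 R P = ⊥ →
        (∀ i < d + 1, hl R i P < ⊤) → ∀ N' : Submodule R P,
          Module.supportDim R N' < ((d + 1 : ℕ) : ℕ∞) → N' ≤ H0 R P := by
      intro P _ _ _ h0 hM'' N' hN'
      obtain ⟨x, hx, hreg⟩ := exists_regular_of_H0 R h0
      obtain ⟨k, hk⟩ : ∃ k : ℕ, hl R 0 P + hl R 1 P = k := by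
        have : hl R 0 P + hl R 1 P ≠ ⊤ := by
          rw [Ne, ENat.add_eq_top, not_or]
          exact ⟨(hM'' 0 (by omega)).ne, (hM'' 1 (by omega)).ne⟩
        exact ⟨_, (ENat.natCast_toNat this).symm⟩
      have main : ∀ n, maximalIdeal R ^ k • N' ≤ (Ideal.span {x}) ^ n • (⊤ : Submodule R P) := by
        intro n
        have hregn : IsSMulRegular P (x ^ (n + 1)) := hreg.pow (n + 1)
        have hxn : x ^ (n + 1) ∈ maximalIdeal R := Ideal.pow_mem_of_mem _ hx _ (by omega)
        set y := x ^ (n + 1) with hy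
        let f : P →ₗ[R] P := LinearMap.lsmul R P y
        have hf : Function.Injective f := hregn
        let g : P →ₗ[R] QuotSMulTop y P := Submodule.mkQ _
        have hg : Function.Surjective g := Submodule.mkQ_surjective _
        have hfg : Function.Exact f g := by
          intro z
          rw [Submodule.mkQ_apply, Submodule.Quotient.mk_eq_zero, Submodule.mem_smul_pointwise_iff_exists]
          simp [f]
        have hle : ∀ i, hl R i (QuotSMulTop y P) ≤ hl R i P + hl R (i + 1) P :=
          hl_quot_le R f g hf hg hfg
        have hd1 : Module.supportDim R (QuotSMulTop y N') + 1 = Module.supportDim R N' :=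
          Module.supportDim_quotSMulTop_succ_eq_supportDim (hregn.submodule N' y) hxn
        have hd2 : Module.supportDim R (Submodule.map g N') ≤ Module.supportDim R (QuotSMulTop y N') := by
          have hker : y • (⊤ : Submodule R N') ≤ LinearMap.ker (g.submoduleMap N') := by
            intro z hz
            rw [Submodule.mem_smul_pointwise_iff_exists] at hz
            obtain ⟨w, -, rfl⟩ := hz
            rw [LinearMap.mem_ker]
            apply Subtype.ext
            change g (y • (w : P)) = 0
            exact hfg.apply_apply_eq_zero (w : P)
          refine Module.supportDim_le_of_surjective (Submodule.liftQ _ (g.submoduleMap N') hker) ?_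
          rw [← LinearMap.range_eq_top, Submodule.range_liftQ, LinearMap.range_eq_top]
          exact LinearMap.submoduleMap_surjective _ _
        have hd3 : Module.supportDim R (Submodule.map g N') < (d : ℕ∞) := by
          refine lt_of_le_of_lt hd2 ?_
          rw [← hd1] at hN'
          generalize Module.supportDim R (QuotSMulTop y N') = t at hN'
          induction t using WithBot.recBotCoe with
          | bot => exact WithBot.bot_lt_coe _
          | coe t =>
            have h1 : t + 1 < (d : ℕ∞) + 1 := by exact_mod_cast hN'
            have h2 : t < (d : ℕ∞) := lt_of_add_lt_add_right h1
            exact_mod_cast h2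
        have h4 := ih (QuotSMulTop y P) (fun i hi => lt_of_le_of_lt (hle i) (by
          rw [ENat.add_lt_top]
          exact ⟨hM'' i (by omega), hM'' (i + 1) (by omega)⟩)) (Submodule.map g N') hd3
        have h5 : Module.length R (Submodule.map g N') ≤ k := by
          rw [← hk]
          refine le_trans ?_ (hle 0)
          rw [hl_zero_eq]
          exact Module.length_le_of_injective (Submodule.inclusion h4) (Submodule.inclusion_injective h4)
        have h6 := pow_smul_eq_bot_of_length_le R k _ (IsNoetherian.noetherian _) h5
        rw [← Submodule.map_smul'', ← le_bot_iff, Submodule.map_le_iff_le_comap, Submodule.comap_bot, Submodule.ker_mkQ] at h6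
        refine h6.trans ?_
        rw [hy, ← Submodule.ideal_span_singleton_smul, ← Ideal.span_singleton_pow]
        exact Submodule.smul_mono_left (Ideal.pow_le_pow_right (by omega))
      have hbot : maximalIdeal R ^ k • N' = ⊥ := by
        rw [eq_bot_iff, ← Ideal.iInf_pow_smul_eq_bot_of_isLocalRing (M := P) (Ideal.span {x}) (by
          rw [Ne, Ideal.span_singleton_eq_top]
          exact fun hu => (IsLocalRing.mem_maximalIdeal x).1 hx hu)]
        exact le_iInf main
      intro z hz
      rw [mem_H0]
      exact ⟨k, fun r hr => (Submodule.mem_bot R).1 (hbot ▸ Submodule.smul_mem_smul hr hz)⟩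
    obtain ⟨c, hc⟩ := H0_pow R (M := M)
    have hM' : ∀ i, hl R i (M ⧸ H0 R M) ≤ hl R i M := hl_quot_torsion_le R (H0 R M) c hc
    have h0 := H0_quot_H0 R (M := M)
    have hfin : Module.Finite R (M ⧸ H0 R M) := inferInstance
    suffices hs : Submodule.map (H0 R M).mkQ N ≤ H0 R (M ⧸ H0 R M) by
      rw [h0, Submodule.map_le_iff_le_comap, Submodule.comap_bot, Submodule.ker_mkQ] at hs
      exact hs
    have hN' : Module.supportDim R (Submodule.map (H0 R M).mkQ N) < ((d + 1 : ℕ) : ℕ∞) := by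
      refine lt_of_le_of_lt ?_ hN
      refine Module.supportDim_le_of_surjective ((H0 R M).mkQ.submoduleMap N) ?_
      exact LinearMap.submoduleMap_surjective _ _
    generalize Submodule.map (H0 R M).mkQ N = N' at hN'
    have hM'' : ∀ i < d + 1, hl R i (M ⧸ H0 R M) < ⊤ := fun i hi => (hM' i).trans_lt (hM i hi)
    clear hM hM' hN hc
    exact step _ h0 hM'' N' hN'

end LemmaQ

section LemmaZ

open scoped Pointwise

variable (R : Type u) [CommRing R]

theorem quot_pow_smul_top (a : R) (q' : Ideal R) (M : Type u) [AddCommGroup M] [Module R M]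
    (n : ℕ) : ((Ideal.span {a} ⊔ q') ^ n • ⊤ : Submodule R (QuotSMulTop a M)) = q' ^ n • ⊤ := by
  have h0 : ∀ N : Submodule R (QuotSMulTop a M), Ideal.span {a} • N = ⊥ := by
    intro N
    rw [eq_bot_iff, Submodule.ideal_span_singleton_smul]
    intro x hx
    obtain ⟨y, -, rfl⟩ := (Submodule.mem_smul_pointwise_iff_exists _ _ _).1 hx
    obtain ⟨z, rfl⟩ := Submodule.mkQ_surjective _ y
    rw [Submodule.mem_bot, ← map_smul, Submodule.mkQ_apply, Submodule.Quotient.mk_eq_zero]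
    exact Submodule.smul_mem_pointwise_smul _ _ _ trivial
  induction n with
  | zero => simp
  | succ n ih =>
    rw [pow_succ', Submodule.mul_smul, ih, Submodule.sup_smul, h0, bot_sup_eq, ← Submodule.mul_smul,
      ← pow_succ']

theorem length_quot_mono {M : Type u} [AddCommGroup M] [Module R M] {A B : Submodule R M}
    (h : A ≤ B) : Module.length R (M ⧸ B) ≤ Module.length R (M ⧸ A) :=
  Module.length_le_of_surjective (Submodule.factor h) (Submodule.factor_surjective h)

/-- finiteness of all Hilbert function values -/
def FinHilb (q : Ideal R) (M : Type u) [AddCommGroup M] [Module R M] : Prop :=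
  ∀ n, Module.length R (M ⧸ (q ^ n • ⊤ : Submodule R M)) < ⊤

variable {R}

theorem FinHilb.quot {a : R} {q' : Ideal R} {M : Type u} [AddCommGroup M] [Module R M]
    (h : FinHilb R (Ideal.span {a} ⊔ q') M) : FinHilb R q' (QuotSMulTop a M) := by
  intro n
  rw [← quot_pow_smul_top]
  refine lt_of_le_of_lt ?_ (h n)
  have hle : ((Ideal.span {a} ⊔ q') ^ n • ⊤ : Submodule R M) ≤
      LinearMap.ker ((Submodule.mkQ ((Ideal.span {a} ⊔ q') ^ n • ⊤ :
        Submodule R (QuotSMulTop a M))).comp (Submodule.mkQ (a • (⊤ : Submodule R M)))) := by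
    rw [LinearMap.ker_comp, Submodule.ker_mkQ, ← Submodule.map_le_iff_le_comap, Submodule.map_smul'']
    exact Submodule.smul_mono le_rfl le_top
  refine Module.length_le_of_surjective (Submodule.liftQ _ _ hle) ?_
  rw [← LinearMap.range_eq_top, Submodule.range_liftQ, LinearMap.range_eq_top]
  exact (Submodule.mkQ_surjective _).comp (Submodule.mkQ_surjective _)

variable [IsLocalRing R] [IsNoetherianRing R]

theorem supportDim_le_length (bs : List R) : ∀ (Z : Type u) [AddCommGroup Z] [Module R Z]
    [Module.Finite R Z], (∀ b ∈ bs, b ∈ maximalIdeal R) →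
    Module.length R (Z ⧸ (Ideal.ofList bs • ⊤ : Submodule R Z)) < ⊤ →
    Module.supportDim R Z ≤ ((bs.length : ℕ) : ℕ∞) := by
  induction bs with
  | nil =>
    intro Z _ _ _ _ h
    have h1 : Module.length R Z < ⊤ := by
      refine lt_of_le_of_lt ?_ h
      refine (Submodule.quotEquivOfEqBot _ ?_).symm.length_eq.le
      simp
    obtain ⟨k, hk⟩ : ∃ k : ℕ, Module.length R Z = k := ⟨_, (ENat.natCast_toNat h1.ne).symm⟩
    have h2 := pow_smul_eq_bot_of_length_le R k (⊤ : Submodule R Z) (IsNoetherian.noetherian _)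
      (by rw [Module.length_top, hk])
    have h3 : ∀ p ∈ Module.support R Z, p = closedPoint R := by
      intro p hp
      rw [Module.support_eq_zeroLocus, PrimeSpectrum.mem_zeroLocus] at hp
      have h4 : maximalIdeal R ^ k ≤ p.asIdeal := by
        refine le_trans ?_ hp
        intro r hr
        rw [Module.mem_annihilator]
        intro z
        rw [← Submodule.mem_bot R, ← h2]
        exact Submodule.smul_mem_smul hr trivial
      have h5 := Ideal.IsPrime.le_of_pow_le h4
      exact PrimeSpectrum.ext (((IsLocalRing.maximalIdeal.isMaximal R).eq_of_le p.2.ne_top h5).symm)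
    have : Subsingleton (Module.support R Z) :=
      ⟨fun p q => Subtype.ext ((h3 p p.2).trans (h3 q q.2).symm)⟩
    have h6 : Module.supportDim R Z ≤ 0 := Order.krullDim_nonpos_of_subsingleton
    simpa using h6
  | cons b bs ih =>
    intro Z _ _ _ hb h
    have h1 := ih (QuotSMulTop b Z) (fun c hc => hb c (List.mem_cons_of_mem _ hc))
      (lt_of_le_of_lt (Submodule.quotOfListConsSMulTopEquivQuotSMulTopInner Z b bs).length_eq.ge h)
    have h2 := Module.supportDim_le_supportDim_quotSMulTop_succ (M := Z)
      (hb b List.mem_cons_self)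
    refine h2.trans ((add_le_add_left h1 1).trans ?_)
    simp

theorem torsion_length {M : Type u} [AddCommGroup M] [Module R M] [Module.Finite R M] (q : Ideal R)
    (h : FinHilb R q M) (Z : Submodule R M) :
    Module.length R (Z ⧸ (q • ⊤ : Submodule R Z)) < ⊤ := by
  obtain ⟨k, hk⟩ := Ideal.exists_pow_inf_eq_pow_smul q Z
  have h1 := hk (k + 1) (by omega)
  refine lt_of_le_of_lt ?_ (h (k + 1))
  have h2 : Submodule.comap Z.subtype (q ^ (k + 1) • ⊤) ≤ (q • ⊤ : Submodule R Z) := by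
    rw [← Submodule.map_le_map_iff_of_injective Z.subtype_injective, Submodule.map_comap_subtype,
      Submodule.map_smul'', Submodule.map_top, Submodule.range_subtype, inf_comm, h1]
    rw [Nat.add_sub_cancel_left, pow_one]
    exact Submodule.smul_mono le_rfl inf_le_right
  refine (length_quot_mono R h2).trans ?_
  refine Module.length_le_of_injective (Submodule.mapQ _ _ Z.subtype le_rfl) ?_
  rw [← LinearMap.ker_eq_bot, Submodule.ker_mapQ]
  simp

/-- The annihilator of a parameter has finite length. -/
theorem torsionBy_le_H0 {M : Type u} [AddCommGroup M] [Module R M] [Module.Finite R M]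
    (a : R) (as : List R) (has : ∀ b ∈ as, b ∈ maximalIdeal R)
    (hfin : FinHilb R (Ideal.ofList (a :: as)) M)
    (hM : ∀ i < as.length + 1, hl R i M < ⊤) (x : M) (hx : a • x = 0) : x ∈ H0 R M := by
  let Z : Submodule R M := Submodule.torsionBy R M a
  have h1 := torsion_length _ hfin Z
  have h2 : (Ideal.ofList (a :: as) • ⊤ : Submodule R Z) = Ideal.ofList as • ⊤ := by
    rw [Ideal.ofList_cons, Submodule.sup_smul]
    rw [sup_eq_right]
    have : (Ideal.span {a} • ⊤ : Submodule R Z) = ⊥ := by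
      rw [eq_bot_iff, Submodule.ideal_span_singleton_smul]
      intro y hy
      obtain ⟨z, -, rfl⟩ := (Submodule.mem_smul_pointwise_iff_exists _ _ _).1 hy
      exact Subtype.ext ((Submodule.mem_torsionBy_iff a (z : M)).1 z.2)
    rw [this]
    exact bot_le
  rw [h2] at h1
  have h3 := supportDim_le_length as Z has h1
  refine lemmaQ R (as.length + 1) M hM Z (lt_of_le_of_lt h3 ?_) hx
  exact_mod_cast Nat.lt_succ_self _

section hlbar

variable {M : Type u} [AddCommGroup M] [Module R M] [Module.Finite R M] (a : R)
  (hZ : ∀ x : M, a • x = 0 → x ∈ H0 R M)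

include hZ in
theorem hl_smul_le (i : ℕ) : hl R i (LinearMap.range (LinearMap.lsmul R M a)) ≤ hl R i M := by
  obtain ⟨c, hc⟩ := H0_pow R (M := M)
  refine hl_surj_torsion_le R (LinearMap.lsmul R M a).rangeRestrict
    (LinearMap.surjective_rangeRestrict _) c (fun r hr x hx => hc r hr x (hZ x ?_)) i
  exact congrArg Subtype.val hx

theorem range_lsmul_exact : Function.Exact (LinearMap.range (LinearMap.lsmul R M a)).subtype
    (Submodule.mkQ (a • (⊤ : Submodule R M))) := by
  intro x
  rw [Submodule.mkQ_apply, Submodule.Quotient.mk_eq_zero, Submodule.mem_smul_pointwise_iff_exists]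
  simp

include hZ in
theorem hl_bar_le (i : ℕ) : hl R i (QuotSMulTop a M) ≤ hl R i M + hl R (i + 1) M :=
  (hl_quot_le R _ _ (Submodule.subtype_injective _) (Submodule.mkQ_surjective _)
    (range_lsmul_exact a) i).trans (by gcongr; exact hl_smul_le a hZ _)

include hZ in
theorem hl_bar_zero_le : hl R 0 (QuotSMulTop a M) +
    hl R 0 (LinearMap.range (LinearMap.lsmul R M a)) ≤ hl R 0 M + hl R 1 M :=
  (hl_zero_quot_le R _ _ (Submodule.subtype_injective _) (Submodule.mkQ_surjective _)
    (range_lsmul_exact a)).trans (by gcongr; exact hl_smul_le a hZ _)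

include hZ in
theorem smul_H0_of_eq (h0 : hl R 0 M < ⊤) (h1 : hl R 1 M < ⊤)
    (he : hl R 0 M + hl R 1 M ≤ hl R 0 (QuotSMulTop a M)) (x : M) (hx : x ∈ H0 R M) :
    a • x = 0 := by
  have h2 := hl_bar_zero_le a hZ
  have h3 : hl R 0 (LinearMap.range (LinearMap.lsmul R M a)) = 0 := by
    have hlt : hl R 0 M + hl R 1 M < ⊤ := ENat.add_lt_top.2 ⟨h0, h1⟩
    have h4 := (add_le_add_left he _).trans h2
    by_contra hne
    have h5 : 1 ≤ hl R 0 (LinearMap.range (LinearMap.lsmul R M a)) := by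
      rwa [ENat.one_le_iff_ne_zero]
    have h6 := (add_le_add_right h5 _).trans h4
    obtain ⟨k, hk⟩ : ∃ k : ℕ, hl R 0 M + hl R 1 M = k := ⟨_, (ENat.natCast_toNat hlt.ne).symm⟩
    rw [hk] at h6
    have : k + 1 ≤ k := by exact_mod_cast h6
    omega
  rw [hl_zero_eq, Module.length_eq_zero_iff, Submodule.subsingleton_iff_eq_bot] at h3
  obtain ⟨n, hn⟩ := (mem_H0 R M x).1 hx
  have h4 : (⟨a • x, ⟨x, rfl⟩⟩ : LinearMap.range (LinearMap.lsmul R M a)) ∈ H0 R _ := by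
    rw [mem_H0]
    refine ⟨n, fun r hr => Subtype.ext ?_⟩
    change r • a • x = 0
    rw [smul_comm, hn r hr, smul_zero]
  rw [h3, Submodule.mem_bot] at h4
  exact congrArg Subtype.val h4

end hlbar

end LemmaZ

section Diff

open scoped Pointwise

variable {R : Type u} [CommRing R]
variable {M : Type u} [AddCommGroup M] [Module R M]

theorem length_sub_quot {D C : Submodule R M} (h : D ≤ C) :
    Module.length R (M ⧸ D) = Module.length R (Submodule.map D.mkQ C) + Module.length R (M ⧸ C) := by
  rw [← (Submodule.quotientQuotientEquivQuotient D C h).length_eq]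
  exact Module.length_eq_add_of_exact (Submodule.map D.mkQ C).subtype (Submodule.map D.mkQ C).mkQ
    (Submodule.subtype_injective _) (Submodule.mkQ_surjective _) (LinearMap.exact_subtype_mkQ _)

theorem length_sup_le (A B : Submodule R M) :
    Module.length R (A ⊔ B : Submodule R M) ≤ Module.length R A + Module.length R B := by
  rw [← Module.length_prod]
  have hc : ∀ p : A × B, (A.subtype.coprod B.subtype) p ∈ A ⊔ B := fun p =>
    Submodule.add_mem_sup p.1.2 p.2.2
  refine Module.length_le_of_surjective ((A.subtype.coprod B.subtype).codRestrict (A ⊔ B) hc) ?_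
  rintro ⟨x, hx⟩
  obtain ⟨y, hy, z, hz, rfl⟩ := Submodule.mem_sup.1 hx
  exact ⟨(⟨y, hy⟩, ⟨z, hz⟩), rfl⟩

theorem length_map_smul_le (C D D' : Submodule R M) (s : R) (hs : s • D ≤ D') :
    Module.length R (Submodule.map D'.mkQ (s • C)) ≤ Module.length R (Submodule.map D.mkQ C) := by
  have hle : D ≤ Submodule.comap (LinearMap.lsmul R M s) D' := fun x hx =>
    hs (Submodule.smul_mem_pointwise_smul _ _ _ hx)
  let φ := Submodule.mapQ D D' (LinearMap.lsmul R M s) hle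
  have h1 : Submodule.map D'.mkQ (s • C) = Submodule.map φ (Submodule.map D.mkQ C) := by
    rw [← Submodule.map_comp]
    ext x
    simp only [Submodule.mem_map, Submodule.mem_smul_pointwise_iff_exists]
    constructor
    · rintro ⟨_, ⟨y, hy, rfl⟩, rfl⟩
      exact ⟨y, hy, rfl⟩
    · rintro ⟨y, hy, rfl⟩
      exact ⟨s • y, ⟨y, hy, rfl⟩, rfl⟩
  rw [h1]
  exact Module.length_le_of_surjective (φ.submoduleMap (Submodule.map D.mkQ C))
    (LinearMap.submoduleMap_surjective _ _)

theorem length_map_ofList_smul_le (C D D' : Submodule R M) (L : List R)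
    (hL : Ideal.ofList L • D ≤ D') :
    Module.length R (Submodule.map D'.mkQ (Ideal.ofList L • C)) ≤
      L.length * Module.length R (Submodule.map D.mkQ C) := by
  induction L with
  | nil =>
    rw [Ideal.ofList_nil, Submodule.bot_smul, Submodule.map_bot, Module.length_bot]
    exact zero_le
  | cons s L ih =>
    rw [Ideal.ofList_cons, Submodule.sup_smul, Submodule.ideal_span_singleton_smul] at hL ⊢
    rw [Submodule.map_sup]
    refine (length_sup_le _ _).trans ?_
    rw [List.length_cons, Nat.cast_add, Nat.cast_one, add_mul, one_mul, add_comm]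
    exact add_le_add (ih (le_sup_right.trans hL)) (length_map_smul_le C D D' s (le_sup_left.trans hL))

theorem growth (C D C' D' : Submodule R M) (L : List R)
    (hL : Ideal.ofList L • D ≤ D') (hC : C' ≤ D' ⊔ Ideal.ofList L • C) :
    Module.length R (Submodule.map D'.mkQ C') ≤
      L.length * Module.length R (Submodule.map D.mkQ C) := by
  refine le_trans ?_ (length_map_ofList_smul_le C D D' L hL)
  have h1 : Submodule.map D'.mkQ C' ≤ Submodule.map D'.mkQ (Ideal.ofList L • C) := by
    refine (Submodule.map_mono hC).trans ?_
    rw [Submodule.map_sup, Submodule.mkQ_map_self, bot_sup_eq]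
  exact Module.length_le_of_injective (Submodule.inclusion h1) (Submodule.inclusion_injective h1)

theorem gens (cs : List R) : ∃ N : ℕ → ℕ,
    (∀ k, ∃ L : List R, Ideal.ofList L = Ideal.ofList cs ^ k ∧ L.length ≤ N k) ∧
    ∀ n, ∑ k ∈ Finset.range n, N k ≤ (n + 1) ^ cs.length := by
  induction cs with
  | nil =>
    refine ⟨fun k => if k = 0 then 1 else 0, ?_, ?_⟩
    · intro k
      rcases k with _ | k
      · exact ⟨[1], by simp, by simp⟩
      · exact ⟨[], by simp, by simp⟩
    · intro n
      rw [Finset.sum_ite_eq']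
      split <;> simp
  | cons c cs ih =>
    obtain ⟨N, hN, hs⟩ := ih
    refine ⟨fun k => ∑ j ∈ Finset.range (k + 1), N j, ?_, ?_⟩
    · intro k
      induction k with
      | zero =>
        obtain ⟨L, h1, h2⟩ := hN 0
        exact ⟨L, by simpa using h1, by simpa using h2⟩
      | succ k ihk =>
        obtain ⟨L, h1, h2⟩ := ihk
        obtain ⟨L', h1', h2'⟩ := hN (k + 1)
        refine ⟨L.map (c * ·) ++ L', ?_, ?_⟩
        · rw [Ideal.ofList_append, h1', Ideal.ofList_cons]
          have h3 : Ideal.ofList (L.map (c * ·)) = Ideal.span {c} * Ideal.ofList L := by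
            clear h1 h2
            induction L with
            | nil => simp
            | cons x L ih =>
              rw [List.map_cons, Ideal.ofList_cons, Ideal.ofList_cons, ih, Ideal.mul_sup,
                Ideal.span_singleton_mul_span_singleton]
          rw [h3, h1, Ideal.ofList_cons]
          generalize Ideal.span {c} = I
          generalize Ideal.ofList cs = J
          apply le_antisymm
          · rw [pow_succ' (I ⊔ J)]
            refine sup_le (Ideal.mul_mono le_sup_left le_rfl) ?_
            rw [pow_succ' J]
            exact Ideal.mul_mono le_sup_right (Ideal.pow_right_mono le_sup_right k)
          · generalize hP : k + 1 = p
            have : ∀ p, (I ⊔ J) ^ (p + 1) ≤ I * (I ⊔ J) ^ p ⊔ J ^ (p + 1) := by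
              intro p
              induction p with
              | zero => simp
              | succ p ihp =>
                rw [pow_succ' _ (p + 1), Ideal.sup_mul]
                refine sup_le le_sup_left ?_
                refine (Ideal.mul_mono le_rfl ihp).trans ?_
                rw [Ideal.mul_sup, ← pow_succ']
                refine sup_le (le_trans ?_ le_sup_left) le_sup_right
                rw [← mul_assoc, mul_comm J I, mul_assoc]
                refine Ideal.mul_mono le_rfl ?_
                rw [pow_succ']
                exact Ideal.mul_mono le_sup_right le_rfl
            subst hP
            exact this k
        · simp only at h2 ⊢
          rw [List.length_append, List.length_map, Finset.sum_range_succ]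
          omega
    · intro n
      rw [List.length_cons]
      calc ∑ k ∈ Finset.range n, ∑ j ∈ Finset.range (k + 1), N j
          ≤ ∑ k ∈ Finset.range n, (n + 1) ^ cs.length := by
            apply Finset.sum_le_sum
            intro k hk
            refine (hs (k + 1)).trans ?_
            have := Finset.mem_range.1 hk
            exact Nat.pow_le_pow_left (by omega) _
        _ = n * (n + 1) ^ cs.length := by simp
        _ ≤ (n + 1) ^ (cs.length + 1) := by
            rw [pow_succ, mul_comm]
            exact Nat.mul_le_mul_left _ (by omega)

/-- `C_n = (q^{n+1} M : a)` -/
def Cn (a : R) (q : Ideal R) (M : Type u) [AddCommGroup M] [Module R M] (n : ℕ) : Submodule R M :=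
  Submodule.comap (LinearMap.lsmul R M a) (q ^ (n + 1) • ⊤)

/-- `D_n = (0 : a) + q^n M` -/
def Dn (a : R) (q : Ideal R) (M : Type u) [AddCommGroup M] [Module R M] (n : ℕ) : Submodule R M :=
  Submodule.torsionBy R M a ⊔ (q ^ n • ⊤)

theorem smul_mem_pow_succ {a : R} {q : Ideal R} (ha : a ∈ q) (n : ℕ) {x : M}
    (hx : x ∈ (q ^ n • ⊤ : Submodule R M)) : a • x ∈ (q ^ (n + 1) • ⊤ : Submodule R M) := by
  rw [pow_succ', Submodule.mul_smul]
  exact Submodule.smul_mem_smul ha hx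

theorem Dn_le_Cn {a : R} {q : Ideal R} (ha : a ∈ q) (n : ℕ) : Dn a q M n ≤ Cn a q M n := by
  refine sup_le ?_ ?_
  · intro x hx
    rw [Submodule.mem_torsionBy_iff] at hx
    change a • x ∈ (q ^ (n + 1) • ⊤ : Submodule R M)
    rw [hx]
    exact zero_mem _
  · intro x hx
    exact smul_mem_pow_succ ha n hx

/-- the defect -/
noncomputable def dl (a : R) (q : Ideal R) (M : Type u) [AddCommGroup M] [Module R M] (n : ℕ) : ℕ∞ :=
  Module.length R (Submodule.map (Dn a q M n).mkQ (Cn a q M n))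

theorem length_succ_eq (a : R) (q' : Ideal R) (n : ℕ) :
    Module.length R (M ⧸ ((Ideal.span {a} ⊔ q') ^ (n + 1) • ⊤ : Submodule R M)) =
      Module.length R (M ⧸ Cn a (Ideal.span {a} ⊔ q') M n) +
      Module.length R (QuotSMulTop a M ⧸ (q' ^ (n + 1) • ⊤ : Submodule R (QuotSMulTop a M))) := by
  rw [← quot_pow_smul_top]
  set q := Ideal.span {a} ⊔ q'
  rw [Cn]
  have hle : (q ^ (n + 1) • ⊤ : Submodule R M) ≤
      Submodule.comap (Submodule.mkQ (a • (⊤ : Submodule R M)))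
      (q ^ (n + 1) • ⊤ : Submodule R (QuotSMulTop a M)) := by
    rw [← Submodule.map_le_iff_le_comap, Submodule.map_smul'']
    exact Submodule.smul_mono le_rfl le_top
  refine Module.length_eq_add_of_exact (Submodule.mapQ _ _ (LinearMap.lsmul R M a) le_rfl)
    (Submodule.mapQ _ _ _ hle) ?_ ?_ ?_
  · rw [← LinearMap.ker_eq_bot, Submodule.ker_mapQ]
    exact Submodule.mkQ_map_self _
  · rw [← LinearMap.range_eq_top, Submodule.range_mapQ, Submodule.range_mkQ, Submodule.map_top,
      Submodule.range_mkQ]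
  · rw [LinearMap.exact_iff, Submodule.ker_mapQ, Submodule.range_mapQ]
    have h1 : (q ^ (n + 1) • ⊤ : Submodule R (QuotSMulTop a M)) =
        Submodule.map (Submodule.mkQ (a • (⊤ : Submodule R M))) (q ^ (n + 1) • ⊤) := by
      rw [Submodule.map_smul'', Submodule.map_top, Submodule.range_mkQ]
    rw [h1, Submodule.comap_map_eq, Submodule.ker_mkQ, Submodule.map_sup, Submodule.mkQ_map_self,
      bot_sup_eq]
    congr 1
    ext x
    simp [Submodule.mem_smul_pointwise_iff_exists]

theorem length_n_eq {a : R} {q : Ideal R} (ha : a ∈ q) (n : ℕ) :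
    Module.length R (M ⧸ (q ^ n • ⊤ : Submodule R M)) =
      Module.length R (Submodule.map (Submodule.mkQ (q ^ n • ⊤ : Submodule R M))
        (Submodule.torsionBy R M a)) + dl a q M n + Module.length R (M ⧸ Cn a q M n) := by
  rw [add_assoc, dl, ← length_sub_quot (Dn_le_Cn ha n),
    length_sub_quot (D := (q ^ n • ⊤ : Submodule R M)) (C := Dn a q M n) le_sup_right]
  have hD : Submodule.map (Submodule.mkQ (q ^ n • ⊤ : Submodule R M)) (Dn a q M n) =
      Submodule.map (Submodule.mkQ (q ^ n • ⊤ : Submodule R M)) (Submodule.torsionBy R M a) := by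
    rw [Dn, Submodule.map_sup, Submodule.mkQ_map_self, sup_bot_eq]
  rw [hD]

theorem dl_growth [IsNoetherianRing R] [Module.Finite R M] (a : R) (q' : Ideal R) :
    ∃ n0, ∀ k, ∀ L : List R, Ideal.ofList L = q' ^ k →
      dl a (Ideal.span {a} ⊔ q') M (n0 + k) ≤ L.length * dl a (Ideal.span {a} ⊔ q') M n0 := by
  set q := Ideal.span {a} ⊔ q' with hq
  obtain ⟨n0, hn0⟩ := Ideal.exists_pow_inf_eq_pow_smul q (LinearMap.range (LinearMap.lsmul R M a))
  refine ⟨n0, fun k L hL => ?_⟩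
  have haq : a ∈ q := le_sup_left (a := Ideal.span {a}) (Ideal.mem_span_singleton_self a)
  have hAR : ∀ k, (q ^ (n0 + 1 + k) • ⊤ ⊓ LinearMap.range (LinearMap.lsmul R M a) : Submodule R M) =
      q ^ k • (q ^ (n0 + 1) • ⊤ ⊓ LinearMap.range (LinearMap.lsmul R M a)) := by
    intro k
    rw [hn0 (n0 + 1 + k) (by omega), hn0 (n0 + 1) (by omega), ← Submodule.mul_smul, ← pow_add]
    congr 2
    omega
  have hC : Cn a q M (n0 + k) ≤ Submodule.torsionBy R M a ⊔ q ^ k • Cn a q M n0 := by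
    intro x hx
    have h1 : a • x ∈ (q ^ (n0 + 1 + k) • ⊤ ⊓ LinearMap.range (LinearMap.lsmul R M a) :
        Submodule R M) := by
      refine ⟨?_, ⟨x, rfl⟩⟩
      have : a • x ∈ (q ^ (n0 + k + 1) • ⊤ : Submodule R M) := hx
      rwa [show n0 + 1 + k = n0 + k + 1 by omega]
    rw [hAR] at h1
    have h2 : (q ^ (n0 + 1) • ⊤ ⊓ LinearMap.range (LinearMap.lsmul R M a) : Submodule R M) ≤
        Submodule.map (LinearMap.lsmul R M a) (Cn a q M n0) := by
      rintro _ ⟨hy, ⟨y, rfl⟩⟩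
      exact ⟨y, hy, rfl⟩
    have h3 := Submodule.smul_mono (le_refl (q ^ k)) h2 h1
    rw [← Submodule.map_smul''] at h3
    obtain ⟨y, hy, hxy⟩ := h3
    have h4 : x = (x - y) + y := by abel
    rw [h4]
    refine Submodule.add_mem_sup ?_ hy
    rw [Submodule.mem_torsionBy_iff, smul_sub, sub_eq_zero]
    exact hxy.symm
  have hpow : ∀ k, q ^ k • Cn a q M n0 ≤ (q ^ (n0 + k) • ⊤ : Submodule R M) ⊔ q' ^ k • Cn a q M n0 := by
    intro k
    induction k with
    | zero => simp
    | succ k ih =>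
      rw [pow_succ', Submodule.mul_smul]
      nth_rewrite 1 [hq]
      rw [Submodule.sup_smul]
      refine sup_le (le_trans ?_ le_sup_left) ?_
      · rw [← Submodule.mul_smul, mul_comm, Submodule.mul_smul]
        have : Ideal.span {a} • Cn a q M n0 ≤ (q ^ (n0 + 1) • ⊤ : Submodule R M) := by
          rw [Submodule.ideal_span_singleton_smul]
          intro x hx
          obtain ⟨y, hy, rfl⟩ := (Submodule.mem_smul_pointwise_iff_exists _ _ _).1 hx
          exact hy
        refine (Submodule.smul_mono le_rfl this).trans ?_
        rw [← Submodule.mul_smul, ← pow_add, show k + (n0 + 1) = n0 + (k + 1) by omega]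
      · refine (Submodule.smul_mono le_rfl ih).trans ?_
        rw [Submodule.smul_sup, ← Submodule.mul_smul, ← Submodule.mul_smul, ← pow_succ' q']
        refine sup_le_sup ?_ le_rfl
        rw [← add_assoc, pow_succ' q]
        exact Submodule.smul_mono (Ideal.mul_mono le_sup_right le_rfl) le_rfl
  apply growth
  · rw [hL, Dn, Dn, Submodule.smul_sup]
    refine sup_le_sup Submodule.smul_le_right ?_
    rw [← Submodule.mul_smul, add_comm n0 k, pow_add]
    exact Submodule.smul_mono (Ideal.mul_mono (Ideal.pow_right_mono le_sup_right k) le_rfl) le_rfl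
  · rw [hL]
    refine hC.trans ?_
    rw [Dn, sup_assoc]
    exact sup_le_sup le_rfl (hpow k)

end Diff

section LowerBound

open scoped Pointwise

/-- polynomial lower bound of degree `D + 1` with leading coefficient `c` -/
def LB (F : ℕ → ℕ) (D : ℕ) (c : ℤ) : Prop :=
  ∃ C : ℕ, ∀ n, c * ((n + D).choose (D + 1) : ℤ) ≤ F n + C * ((n : ℤ) + 1) ^ D

theorem LB.mono {F : ℕ → ℕ} {D : ℕ} {c c' : ℤ} (h : LB F D c) (hc : c' ≤ c) : LB F D c' := by
  obtain ⟨C, hC⟩ := h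
  exact ⟨C, fun n => le_trans (by gcongr) (hC n)⟩

theorem LB_step {F G δ : ℕ → ℕ} {z C D : ℕ} {c : ℤ}
    (hF : ∀ n, F n + G (n + 1) ≤ F (n + 1) + z + δ n)
    (hδ : ∀ n, ∑ i ∈ Finset.range n, δ i ≤ C * (n + 1) ^ (D + 1))
    (hG : LB G D c) : LB F (D + 1) c := by
  obtain ⟨C', hC'⟩ := hG
  have key : ∀ n, c * ((n + (D + 1)).choose (D + 2) : ℤ) ≤ F n +
      ∑ i ∈ Finset.range n, ((C' : ℤ) * ((i : ℤ) + 2) ^ D + z) +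
      ((∑ i ∈ Finset.range n, δ i : ℕ) : ℤ) := by
    intro n
    induction n with
    | zero => simp
    | succ n ih =>
      have h1 := hF n
      have h2 := hC' (n + 1)
      have h3 : (n + 1 + (D + 1)).choose (D + 2) =
        (n + (D + 1)).choose (D + 1) + (n + (D + 1)).choose (D + 2) := by
        rw [show n + 1 + (D + 1) = (n + (D + 1)) + 1 by omega, Nat.choose_succ_succ]
      rw [h3, Finset.sum_range_succ, Finset.sum_range_succ]
      rw [show n + 1 + D = n + (D + 1) by omega] at h2
      zify at h1
      push_cast at h2 ih ⊢
      rw [show ((n : ℤ) + 1 + 1) = (n : ℤ) + 2 by ring] at h2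
      linarith
  refine ⟨C' + z + C, fun n => (key n).trans ?_⟩
  have h1 : ∑ i ∈ Finset.range n, ((C' : ℤ) * ((i : ℤ) + 2) ^ D + z) ≤
      (C' + z : ℤ) * ((n : ℤ) + 1) ^ (D + 1) := by
    calc ∑ i ∈ Finset.range n, ((C' : ℤ) * ((i : ℤ) + 2) ^ D + z)
        ≤ ∑ i ∈ Finset.range n, ((C' + z : ℤ) * ((n : ℤ) + 1) ^ D) := by
          apply Finset.sum_le_sum
          intro i hi
          have hi' : (i : ℤ) + 2 ≤ (n : ℤ) + 1 := by
            have := Finset.mem_range.1 hi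
            omega
          have h2 : ((i : ℤ) + 2) ^ D ≤ ((n : ℤ) + 1) ^ D := by gcongr
          have h3 : (1 : ℤ) ≤ ((n : ℤ) + 1) ^ D := one_le_pow₀ (by omega)
          have hz : (0 : ℤ) ≤ z := by positivity
          have hC0 : (0 : ℤ) ≤ C' := by positivity
          nlinarith [mul_le_mul_of_nonneg_left h2 hC0, mul_le_mul_of_nonneg_left h3 hz]
      _ = n * ((C' + z : ℤ) * ((n : ℤ) + 1) ^ D) := by simp
      _ ≤ (C' + z : ℤ) * ((n : ℤ) + 1) ^ (D + 1) := by
          rw [pow_succ]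
          have : 0 ≤ (C' + z : ℤ) * ((n : ℤ) + 1) ^ D := by positivity
          nlinarith
  have h2 : ((∑ i ∈ Finset.range n, δ i : ℕ) : ℤ) ≤ C * ((n : ℤ) + 1) ^ (D + 1) := by
    exact_mod_cast hδ n
  push_cast at h2 ⊢
  linarith

theorem LB_step_zero {F δ : ℕ → ℕ} {z C l : ℕ}
    (hF : ∀ n, F n + l ≤ F (n + 1) + z + δ n)
    (hδ : ∀ n, ∑ i ∈ Finset.range n, δ i ≤ C) : LB F 0 ((l : ℤ) - z) := by
  refine ⟨C, fun n => ?_⟩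
  have key : ((l : ℤ) - z) * n ≤ F n + ((∑ i ∈ Finset.range n, δ i : ℕ) : ℤ) := by
    induction n with
    | zero => simp
    | succ n ih =>
      rw [Finset.sum_range_succ]
      have h1 := hF n
      zify at h1
      push_cast at ih ⊢
      linarith
  have h2 : ((∑ i ∈ Finset.range n, δ i : ℕ) : ℤ) ≤ C := by exact_mod_cast hδ n
  simp
  linarith

/-- the invariant `∑ C(k,j) h_j` -/
def Asum (k : ℕ) (h : ℕ → ℕ) : ℕ := ∑ j ∈ Finset.range (k + 1), k.choose j * h j

theorem Asum_zero (h : ℕ → ℕ) : Asum 0 h = h 0 := by simp [Asum]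

theorem Asum_succ (k : ℕ) (h : ℕ → ℕ) : Asum (k + 1) h = Asum k (fun i => h i + h (i + 1)) := by
  unfold Asum
  rw [Finset.sum_range_succ']
  simp only [Nat.choose_succ_succ, mul_add, add_mul, Finset.sum_add_distrib]
  have h1 : ∑ x ∈ Finset.range (k + 1), k.choose (x + 1) * h (x + 1) + (k + 1).choose 0 * h 0 =
      ∑ x ∈ Finset.range (k + 1), k.choose x * h x := by
    have h2 := Finset.sum_range_succ' (fun x => k.choose x * h x) (k + 1)
    rw [Finset.sum_range_succ] at h2
    simp at h2 ⊢
    omega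
  simp only [Nat.succ_eq_add_one] at *
  omega

theorem Asum_add (k : ℕ) (h g : ℕ → ℕ) : Asum k (fun i => h i + g i) = Asum k h + Asum k g := by
  simp [Asum, mul_add, Finset.sum_add_distrib]

theorem Asum_mono {k : ℕ} {h g : ℕ → ℕ} (hl : ∀ i ≤ k, h i ≤ g i) : Asum k h ≤ Asum k g := by
  apply Finset.sum_le_sum
  intro i hi
  exact Nat.mul_le_mul_left _ (hl i (by simpa [Nat.lt_succ_iff] using hi))

theorem Asum_congr {k : ℕ} {h g : ℕ → ℕ} (hl : ∀ i ≤ k, h i = g i) : Asum k h = Asum k g :=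
  le_antisymm (Asum_mono fun i hi => (hl i hi).le) (Asum_mono fun i hi => (hl i hi).ge)

theorem eq_of_Asum_le {k : ℕ} {h g : ℕ → ℕ} (hl : ∀ i ≤ k, h i ≤ g i) (he : Asum k g ≤ Asum k h) :
    ∀ i ≤ k, h i = g i := by
  intro i hi
  by_contra hne
  have hlt : Asum k h < Asum k g := by
    apply Finset.sum_lt_sum
    · intro j hj
      exact Nat.mul_le_mul_left _ (hl j (by simpa [Nat.lt_succ_iff] using hj))
    · refine ⟨i, by simpa [Nat.lt_succ_iff] using hi, ?_⟩
      have := hl i hi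
      exact Nat.mul_lt_mul_of_pos_left (by omega) (Nat.choose_pos hi)
  omega

variable {R : Type u} [CommRing R]

/-- Hilbert-Samuel function -/
noncomputable def Fn (q : Ideal R) (M : Type u) [AddCommGroup M] [Module R M] (n : ℕ) : ℕ :=
  (Module.length R (M ⧸ (q ^ n • ⊤ : Submodule R M))).toNat

theorem FinHilb.coe_Fn {q : Ideal R} {M : Type u} [AddCommGroup M] [Module R M]
    (h : FinHilb R q M) (n : ℕ) :
    (Fn q M n : ℕ∞) = Module.length R (M ⧸ (q ^ n • ⊤ : Submodule R M)) :=
  ENat.natCast_toNat (h n).ne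

theorem Fn_bar_one (a : R) (q' : Ideal R) (M : Type u) [AddCommGroup M] [Module R M] :
    Fn q' (QuotSMulTop a M) 1 = Fn (Ideal.span {a} ⊔ q') M 1 := by
  unfold Fn
  have h1 := length_succ_eq (M := M) a q' 0
  have h2 : Cn a (Ideal.span {a} ⊔ q') M 0 = ⊤ := by
    rw [eq_top_iff]
    intro x _
    change a • x ∈ ((Ideal.span {a} ⊔ q') ^ (0 + 1) • ⊤ : Submodule R M)
    rw [zero_add, pow_one]
    exact Submodule.smul_mem_smul (le_sup_left (a := Ideal.span {a})
      (Ideal.mem_span_singleton_self a)) trivial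
  rw [h2] at h1
  have h3 : Module.length R (M ⧸ (⊤ : Submodule R M)) = 0 := Module.length_eq_zero
  rw [h3, zero_add, zero_add] at h1
  rw [h1]

theorem Fn_bot (M : Type u) [AddCommGroup M] [Module R M] (n : ℕ) :
    Fn (⊥ : Ideal R) M (n + 1) = Fn (⊥ : Ideal R) M 1 := by
  unfold Fn
  have : (⊥ : Ideal R) ^ (n + 1) = ⊥ ^ 1 := by
    rw [pow_one, pow_succ, Ideal.mul_bot]
  rw [this]

section
variable {M : Type u} [AddCommGroup M] [Module R M] {a : R} {q' : Ideal R}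
  (hfin : FinHilb R (Ideal.span {a} ⊔ q') M)

theorem mem_sup_span : a ∈ Ideal.span {a} ⊔ q' :=
  le_sup_left (a := Ideal.span {a}) (Ideal.mem_span_singleton_self a)

include hfin in
theorem dl_lt_top (n : ℕ) : dl a (Ideal.span {a} ⊔ q') M n < ⊤ := by
  refine lt_of_le_of_lt ?_ (hfin n)
  rw [length_n_eq mem_sup_span n]
  exact le_add_self.trans le_self_add

include hfin in
theorem diff_ineq (hz : Module.length R (Submodule.torsionBy R M a) < ⊤) (n : ℕ) :
    Fn (Ideal.span {a} ⊔ q') M n + Fn q' (QuotSMulTop a M) (n + 1) ≤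
      Fn (Ideal.span {a} ⊔ q') M (n + 1) + (Module.length R (Submodule.torsionBy R M a)).toNat +
        (dl a (Ideal.span {a} ⊔ q') M n).toNat := by
  have h1 := length_succ_eq (M := M) a q' n
  have h2 := length_n_eq (M := M) (mem_sup_span (a := a) (q' := q')) n
  have h3 : Module.length R (Submodule.map (Submodule.mkQ
      ((Ideal.span {a} ⊔ q') ^ n • ⊤ : Submodule R M)) (Submodule.torsionBy R M a)) ≤
      Module.length R (Submodule.torsionBy R M a) :=
    Module.length_le_of_surjective _ (LinearMap.submoduleMap_surjective _ _)
  rw [← Nat.cast_le (α := ℕ∞)]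
  push_cast
  rw [hfin.coe_Fn, hfin.quot.coe_Fn, hfin.coe_Fn, ENat.natCast_toNat hz.ne,
    ENat.natCast_toNat (dl_lt_top hfin n).ne, h1, h2]
  calc _ ≤ (Module.length R (Submodule.torsionBy R M a) + dl a (Ideal.span {a} ⊔ q') M n +
      Module.length R (M ⧸ Cn a (Ideal.span {a} ⊔ q') M n)) + Module.length R (QuotSMulTop a M ⧸
        (q' ^ (n + 1) • ⊤ : Submodule R (QuotSMulTop a M))) := by gcongr
    _ = _ := by ring

include hfin in
theorem dl_sum [IsNoetherianRing R] [Module.Finite R M] (cs : List R) (hcs : Ideal.ofList cs = q') :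
    ∃ C : ℕ, ∀ n, ∑ i ∈ Finset.range n, (dl a (Ideal.span {a} ⊔ q') M i).toNat ≤
      C * (n + 1) ^ cs.length := by
  obtain ⟨n0, hn0⟩ := dl_growth (M := M) a q'
  obtain ⟨N, hN, hs⟩ := gens cs
  set δ : ℕ → ℕ := fun i => (dl a (Ideal.span {a} ⊔ q') M i).toNat with hδ
  have h1 : ∀ k, δ (n0 + k) ≤ N k * δ n0 := by
    intro k
    obtain ⟨L, hL, hlen⟩ := hN k
    have h2 := hn0 k L (by rw [hL, hcs])
    have h3 : δ (n0 + k) ≤ L.length * δ n0 := by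
      rw [← Nat.cast_le (α := ℕ∞)]
      push_cast
      rw [hδ]
      simp only
      rwa [ENat.natCast_toNat (dl_lt_top hfin _).ne, ENat.natCast_toNat (dl_lt_top hfin _).ne]
    exact h3.trans (Nat.mul_le_mul_right _ hlen)
  refine ⟨∑ i ∈ Finset.range n0, δ i + δ n0, fun n => ?_⟩
  have h4 : ∑ i ∈ Finset.range n, δ i ≤ ∑ i ∈ Finset.range (n0 + n), δ i :=
    Finset.sum_le_sum_of_subset (Finset.range_mono (by omega))
  refine h4.trans ?_
  rw [Finset.sum_range_add, add_mul]
  have h5 : ∑ x ∈ Finset.range n, δ (n0 + x) ≤ δ n0 * (n + 1) ^ cs.length := by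
    calc ∑ x ∈ Finset.range n, δ (n0 + x) ≤ ∑ x ∈ Finset.range n, N x * δ n0 :=
          Finset.sum_le_sum fun i _ => h1 i
      _ = (∑ x ∈ Finset.range n, N x) * δ n0 := by rw [Finset.sum_mul]
      _ ≤ _ := by rw [mul_comm]; exact Nat.mul_le_mul_left _ (hs n)
  have h6 : ∑ i ∈ Finset.range n0, δ i ≤ (∑ i ∈ Finset.range n0, δ i) * (n + 1) ^ cs.length :=
    Nat.le_mul_of_pos_right _ (by positivity)
  omega

end

end LowerBound

section StdSec

open scoped Pointwise

variable {R : Type u} [CommRing R] [IsLocalRing R] [IsNoetherianRing R]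

/-- numeric lengths of local cohomology -/
noncomputable def hn (R : Type u) [CommRing R] [IsLocalRing R] (M : Type u) [AddCommGroup M]
    [Module R M] (i : ℕ) : ℕ := (hl R i M).toNat

/-- parameter list on a generalized Cohen-Macaulay module -/
def Good (as : List R) (M : Type u) [AddCommGroup M] [Module R M] : Prop :=
  (∀ b ∈ as, b ∈ maximalIdeal R) ∧ FinHilb R (Ideal.ofList as) M ∧ ∀ i < as.length, hl R i M < ⊤

/-- the leading constant -/
noncomputable def lead (as : List R) (M : Type u) [AddCommGroup M] [Module R M] : ℤ :=
  (Fn (Ideal.ofList as) M 1 : ℤ) - Asum (as.length - 1) (hn R M)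

/-- standardness -/
def Std (as : List R) (M : Type u) [AddCommGroup M] [Module R M] : Prop :=
  ¬ LB (Fn (Ideal.ofList as) M) (as.length - 1) (lead as M + 1)

section
variable {M : Type u} [AddCommGroup M] [Module R M] [Module.Finite R M] {a b : R} {as cs : List R}

theorem Good.Z (h : Good (a :: as) M) : ∀ x : M, a • x = 0 → x ∈ H0 R M :=
  torsionBy_le_H0 a as (fun c hc => h.1 c (List.mem_cons_of_mem _ hc)) h.2.1 h.2.2

theorem Good.zlen (h : Good (a :: as) M) :
    Module.length R (Submodule.torsionBy R M a) ≤ hl R 0 M := by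
  rw [hl_zero_eq]
  have hle : Submodule.torsionBy R M a ≤ H0 R M := fun x hx => h.Z x hx
  exact Module.length_le_of_injective (Submodule.inclusion hle) (Submodule.inclusion_injective hle)

theorem Good.h0 (h : Good (a :: as) M) : hl R 0 M < ⊤ := h.2.2 0 (by simp)

theorem Good.fin (h : Good (a :: as) M) : FinHilb R (Ideal.span {a} ⊔ Ideal.ofList as) M := by
  have := h.2.1
  rwa [Ideal.ofList_cons] at this

theorem Good.quot (h : Good (a :: as) M) : Good as (QuotSMulTop a M) := by
  refine ⟨fun c hc => h.1 c (List.mem_cons_of_mem _ hc), h.fin.quot, fun i hi => ?_⟩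
  refine lt_of_le_of_lt (hl_bar_le a h.Z i) (ENat.add_lt_top.2 ⟨h.2.2 i ?_, h.2.2 (i + 1) ?_⟩)
  · simp; omega
  · simp; omega

theorem Good.hn_bar_le (h : Good (a :: as) M) (i : ℕ) (hi : i < as.length) :
    hn R (QuotSMulTop a M) i ≤ hn R M i + hn R M (i + 1) := by
  have h1 := hl_bar_le a h.Z i
  have h2 := h.2.2 i (by simp; omega)
  have h3 := h.2.2 (i + 1) (by simp; omega)
  have h4 := h.quot.2.2 i hi
  rw [← Nat.cast_le (α := ℕ∞)]
  push_cast
  unfold hn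
  rwa [ENat.natCast_toNat h2.ne, ENat.natCast_toNat h3.ne, ENat.natCast_toNat h4.ne]

theorem Good.LB_cons (h : Good (a :: as) M) {D : ℕ} (hD : as.length = D + 1) {c : ℤ}
    (hc : LB (Fn (Ideal.ofList as) (QuotSMulTop a M)) D c) :
    LB (Fn (Ideal.ofList (a :: as)) M) (D + 1) c := by
  obtain ⟨C, hC⟩ := dl_sum h.fin as rfl
  rw [hD] at hC
  rw [Ideal.ofList_cons]
  exact LB_step (diff_ineq h.fin (lt_of_le_of_lt h.zlen h.h0)) hC hc

theorem Good.LB_single (h : Good [a] M) :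
    LB (Fn (Ideal.ofList [a]) M) 0 ((Fn (Ideal.ofList [a]) M 1 : ℤ) -
      (Module.length R (Submodule.torsionBy R M a)).toNat) := by
  obtain ⟨C, hC⟩ := dl_sum h.fin [] rfl
  have h1 := diff_ineq h.fin (lt_of_le_of_lt h.zlen h.h0)
  rw [Ideal.ofList_cons]
  refine LB_step_zero (C := C) (δ := fun i =>
    (dl a (Ideal.span {a} ⊔ Ideal.ofList []) M i).toNat) (fun n => ?_) (fun n => by simpa using hC n)
  · have h2 := h1 n
    rw [← Fn_bar_one]
    rw [Ideal.ofList_nil] at h2 ⊢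
    rwa [Fn_bot] at h2

theorem Good.zlen_toNat (h : Good (a :: as) M) :
    (Module.length R (Submodule.torsionBy R M a)).toNat ≤ hn R M 0 := by
  rw [← Nat.cast_le (α := ℕ∞)]
  unfold hn
  rw [ENat.natCast_toNat (lt_of_le_of_lt h.zlen h.h0).ne, ENat.natCast_toNat h.h0.ne]
  exact h.zlen

theorem lead_cons_eq : lead (a :: b :: cs) M = (Fn (Ideal.ofList (b :: cs)) (QuotSMulTop a M) 1 : ℤ) -
    Asum cs.length (fun i => hn R M i + hn R M (i + 1)) := by
  unfold lead
  rw [Fn_bar_one, ← Ideal.ofList_cons]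
  simp only [List.length_cons, Nat.add_sub_cancel]
  rw [Asum_succ]

theorem Good.Asum_bar_le (h : Good (a :: b :: cs) M) : Asum cs.length (hn R (QuotSMulTop a M)) ≤
    Asum cs.length (fun i => hn R M i + hn R M (i + 1)) :=
  Asum_mono fun i hi => h.hn_bar_le i (by simp; omega)

theorem Good.lead_le (h : Good (a :: b :: cs) M) :
    lead (a :: b :: cs) M ≤ lead (b :: cs) (QuotSMulTop a M) := by
  rw [lead_cons_eq]
  unfold lead
  have := h.Asum_bar_le
  simp only [List.length_cons, Nat.add_sub_cancel]
  omega

end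

theorem Good.LB_main (as : List R) : ∀ (a : R) (M : Type u) [AddCommGroup M] [Module R M]
    [Module.Finite R M], Good (a :: as) M →
    LB (Fn (Ideal.ofList (a :: as)) M) as.length (lead (a :: as) M) := by
  induction as with
  | nil =>
    intro a M _ _ _ h
    refine h.LB_single.mono ?_
    have := h.zlen_toNat
    simp only [lead, List.length_cons, List.length_nil, Asum_zero, zero_add, Nat.sub_self]
    omega
  | cons b cs ih =>
    intro a M _ _ _ h
    exact (h.LB_cons rfl (ih b _ h.quot)).mono h.lead_le

section
variable {M : Type u} [AddCommGroup M] [Module R M] [Module.Finite R M] {a b : R} {as cs : List R}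

theorem Std.Asum_eq (hs : Std (a :: b :: cs) M) (h : Good (a :: b :: cs) M) :
    Asum cs.length (fun i => hn R M i + hn R M (i + 1)) ≤ Asum cs.length (hn R (QuotSMulTop a M)) := by
  by_contra hlt
  apply hs
  refine (h.LB_cons rfl (Good.LB_main cs b _ h.quot)).mono ?_
  rw [lead_cons_eq]
  unfold lead
  simp only [List.length_cons, Nat.add_sub_cancel]
  omega

theorem Std.hn_bar (hs : Std (a :: b :: cs) M) (h : Good (a :: b :: cs) M) :
    ∀ i ≤ cs.length, hn R (QuotSMulTop a M) i = hn R M i + hn R M (i + 1) :=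
  eq_of_Asum_le (fun i hi => h.hn_bar_le i (by simp; omega)) (hs.Asum_eq h)

theorem Std.lead_eq (hs : Std (a :: b :: cs) M) (h : Good (a :: b :: cs) M) :
    lead (a :: b :: cs) M = lead (b :: cs) (QuotSMulTop a M) := by
  rw [lead_cons_eq]
  unfold lead
  have h1 := h.Asum_bar_le
  have h2 := hs.Asum_eq h
  simp only [List.length_cons, Nat.add_sub_cancel]
  omega

theorem Std.quot (hs : Std (a :: b :: cs) M) (h : Good (a :: b :: cs) M) :
    Std (b :: cs) (QuotSMulTop a M) := by
  intro hlb
  apply hs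
  rw [hs.lead_eq h]
  exact h.LB_cons rfl hlb

theorem Std.head_smul (hs : Std (a :: as) M) (h : Good (a :: as) M) (x : M) (hx : x ∈ H0 R M) :
    a • x = 0 := by
  rcases as with _ | ⟨b, cs⟩
  · have hle : Submodule.torsionBy R M a ≤ H0 R M := fun x hx => h.Z x hx
    have hlen : Module.length R (H0 R M) ≤ Module.length R (Submodule.torsionBy R M a) := by
      rw [← hl_zero_eq]
      by_contra hlt
      apply hs
      refine h.LB_single.mono ?_
      have h3 : (Module.length R (Submodule.torsionBy R M a)).toNat < hn R M 0 := by
        rw [← Nat.cast_lt (α := ℕ∞)]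
        unfold hn
        rw [ENat.natCast_toNat (lt_of_le_of_lt h.zlen h.h0).ne, ENat.natCast_toNat h.h0.ne]
        exact not_le.1 hlt
      simp only [lead, List.length_cons, List.length_nil, Asum_zero, zero_add, Nat.sub_self]
      omega
    have heq : Submodule.torsionBy R M a = H0 R M := by
      by_contra hne
      have h4 : Module.length R (Submodule.torsionBy R M a) < Module.length R (H0 R M) := by
        rw [Module.length_submodule, Module.length_submodule]
        apply Order.height_strictMono (lt_of_le_of_ne hle hne)
        rw [← Module.length_submodule]
        exact lt_of_le_of_lt h.zlen h.h0
      exact absurd hlen (not_le.2 h4)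
    rw [← heq] at hx
    exact hx
  · refine smul_H0_of_eq a h.Z h.h0 (h.2.2 1 (by simp)) ?_ x hx
    have h1 := hs.hn_bar h 0 (Nat.zero_le _)
    have h2 := congrArg (Nat.cast (R := ℕ∞)) h1
    push_cast at h2
    unfold hn at h2
    rw [ENat.natCast_toNat h.h0.ne, ENat.natCast_toNat (h.2.2 (0 + 1) (by simp)).ne,
      ENat.natCast_toNat h.quot.h0.ne] at h2
    exact h2.ge

theorem ofList_perm {as bs : List R} (hp : as.Perm bs) : Ideal.ofList as = Ideal.ofList bs := by
  unfold Ideal.ofList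
  congr 1
  ext x
  exact hp.mem_iff

theorem Good.perm {as bs : List R} (hp : as.Perm bs) (h : Good as M) : Good bs M := by
  refine ⟨fun b hb => h.1 b (hp.mem_iff.2 hb), ?_, ?_⟩
  · rw [← ofList_perm hp]; exact h.2.1
  · rw [← hp.length_eq]; exact h.2.2

theorem Std.perm {as bs : List R} (hp : as.Perm bs) (h : Std as M) : Std bs M := by
  unfold Std lead at *
  rwa [← ofList_perm hp, ← hp.length_eq]

theorem Std.smul_H0 {as : List R} (hs : Std as M) (h : Good as M) (b : R) (hb : b ∈ as) (x : M)
    (hx : x ∈ H0 R M) : b • x = 0 := by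
  classical
  have hp := List.perm_cons_erase hb
  exact (hs.perm hp).head_smul (h.perm hp) x hx

end

/-- unconditioned strong d-sequence type condition -/
def DS : List R → ∀ (M : Type u) [AddCommGroup M] [Module R M], Prop
  | [], _, _, _ => True
  | a :: as, M, _, _ => (∀ x : M, a • a • x = 0 → ∀ b ∈ a :: as, b • x = 0) ∧
      DS as (QuotSMulTop a M)

theorem Std.ds (as : List R) : ∀ (M : Type u) [AddCommGroup M] [Module R M] [Module.Finite R M],
    Good as M → Std as M → DS as M := by
  induction as with
  | nil => intros; trivial
  | cons a as ih =>
    intro M _ _ _ h hs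
    refine ⟨fun x hx b hb => ?_, ?_⟩
    · have h1 := h.Z _ hx
      obtain ⟨n, hn⟩ := (mem_H0 R M _).1 h1
      have h2 : x ∈ H0 R M := by
        rw [mem_H0]
        obtain ⟨c, hc⟩ := H0_pow R (M := M)
        refine ⟨c + n, fun r hr => ?_⟩
        rw [pow_add] at hr
        refine Submodule.mul_induction_on hr ?_ ?_
        · intro s hs t ht
          rw [mul_smul]
          refine hc s hs _ (h.Z _ ?_)
          rw [smul_comm]
          exact hn t ht
        · intro s t hs ht
          rw [add_smul, hs, ht, add_zero]
      exact hs.smul_H0 h b hb x h2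
    · rcases as with _ | ⟨b, cs⟩
      · trivial
      · exact ih _ h.quot (hs.quot h)

end StdSec

section DSSec

open scoped Pointwise

variable {R : Type u} [CommRing R]

theorem mem_ofList_cons_smul {M : Type u} [AddCommGroup M] [Module R M] (a : R) (as : List R) (x : M) :
    x ∈ (Ideal.ofList (a :: as) • ⊤ : Submodule R M) ↔
      Submodule.mkQ (a • (⊤ : Submodule R M)) x ∈
        (Ideal.ofList as • ⊤ : Submodule R (QuotSMulTop a M)) := by
  have h1 : (Ideal.ofList as • ⊤ : Submodule R (QuotSMulTop a M)) =
      Submodule.map (Submodule.mkQ (a • (⊤ : Submodule R M))) (Ideal.ofList as • ⊤) := by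
    rw [Submodule.map_smul'', Submodule.map_top, Submodule.range_mkQ]
  rw [h1, ← Submodule.mem_comap, Submodule.comap_map_eq, Submodule.ker_mkQ, Ideal.ofList_cons,
    Submodule.sup_smul, Submodule.ideal_span_singleton_smul, sup_comm]

variable [IsLocalRing R] [IsNoetherianRing R]

theorem DS.lemma1 (as : List R) : ∀ (M : Type u) [AddCommGroup M] [Module R M], DS as M → ∀ x : M,
    x ∈ (Ideal.ofList as • ⊤ : Submodule R M) → (∀ b ∈ as, b • x = 0) → x = 0 := by
  induction as with
  | nil =>
    intro M _ _ _ x hx _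
    simpa using hx
  | cons a as ih =>
    intro M _ _ h x hx hb
    have h1 := ih _ h.2 (Submodule.mkQ (a • (⊤ : Submodule R M)) x)
      ((mem_ofList_cons_smul a as x).1 hx) (fun b hb' => by
        rw [← map_smul, hb b (List.mem_cons_of_mem _ hb'), map_zero])
    rw [Submodule.mkQ_apply, Submodule.Quotient.mk_eq_zero,
      Submodule.mem_smul_pointwise_iff_exists] at h1
    obtain ⟨y, -, rfl⟩ := h1
    exact h.1 y (hb a List.mem_cons_self) a List.mem_cons_self

theorem DS.F2 (c : R) (cs bs : List R) : ∀ (M : Type u) [AddCommGroup M] [Module R M],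
    DS (bs ++ c :: cs) M → ∀ m : M, m ∈ (Ideal.ofList (bs ++ c :: cs) • ⊤ : Submodule R M) →
    c • m ∈ (Ideal.ofList bs • ⊤ : Submodule R M) → m ∈ (Ideal.ofList bs • ⊤ : Submodule R M) := by
  induction bs with
  | nil =>
    intro M _ _ h m hm hc
    have hc0 : c • m = 0 := by simpa using hc
    have : m = 0 := DS.lemma1 _ M h m hm (h.1 m (by rw [hc0, smul_zero]))
    rw [this]
    exact zero_mem _
  | cons b bs ih =>
    intro M _ _ h m hm hc
    rw [mem_ofList_cons_smul] at hc ⊢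
    rw [List.cons_append, mem_ofList_cons_smul] at hm
    refine ih _ h.2 _ hm ?_
    rwa [← map_smul]

theorem DS.lemma2 (M : Type u) [AddCommGroup M] [Module R M] (n : ℕ) : ∀ (cs bs : List R),
    DS (bs ++ cs) M → (Ideal.ofList bs • ⊤ ⊓ Ideal.ofList (bs ++ cs) ^ (n + 1) • ⊤ : Submodule R M) ≤
      Ideal.ofList bs • (Ideal.ofList (bs ++ cs) ^ n • ⊤) := by
  induction n with
  | zero =>
    intro cs bs _
    simp
  | succ n ihn =>
    intro cs
    induction cs with
    | nil =>
      intro bs h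
      rw [List.append_nil, pow_succ' _ (n + 1), Submodule.mul_smul]
      exact inf_le_right
    | cons c cs ih =>
      intro bs h x hx
      have e : bs ++ c :: cs = (bs ++ [c]) ++ cs := by simp
      have h1 := ih (bs ++ [c]) (by rwa [← e])
      rw [← e] at h1
      have h2 := h1 ⟨Submodule.smul_mono (by rw [Ideal.ofList_append]; exact le_sup_left) le_rfl hx.1,
        hx.2⟩
      rw [Ideal.ofList_append, Submodule.sup_smul, Ideal.ofList_singleton,
        Submodule.ideal_span_singleton_smul] at h2
      obtain ⟨y, hy, z, hz, rfl⟩ := Submodule.mem_sup.1 h2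
      obtain ⟨m, hm, rfl⟩ := (Submodule.mem_smul_pointwise_iff_exists _ _ _).1 hz
      have hy' : y ∈ (Ideal.ofList bs • ⊤ : Submodule R M) := Submodule.smul_mono le_rfl le_top hy
      have hcm : c • m ∈ (Ideal.ofList bs • ⊤ : Submodule R M) := by
        have := Submodule.sub_mem _ hx.1 hy'
        simpa using this
      have hm1 : m ∈ (Ideal.ofList (bs ++ c :: cs) • ⊤ : Submodule R M) := by
        refine Submodule.smul_mono ?_ le_rfl hm
        exact Ideal.pow_le_self (by omega)
      have h3 := DS.F2 c cs bs M h m hm1 hcm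
      have h4 := ihn (c :: cs) bs h ⟨h3, hm⟩
      refine Submodule.add_mem _ hy ?_
      have hcq : c ∈ Ideal.ofList (bs ++ c :: cs) := Ideal.subset_span (by simp)
      have h5 := Submodule.smul_mem_smul hcq h4
      rwa [← Submodule.mul_smul, mul_comm, Submodule.mul_smul, ← Submodule.mul_smul _ _ ⊤,
        ← pow_succ'] at h5

theorem DS.dl_zero {M : Type u} [AddCommGroup M] [Module R M] {a : R} {as : List R}
    (h : DS (a :: as) M) (n : ℕ) : dl a (Ideal.ofList (a :: as)) M n = 0 := by
  have hle : Cn a (Ideal.ofList (a :: as)) M n ≤ Dn a (Ideal.ofList (a :: as)) M n := by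
    intro x hx
    have h1 := DS.lemma2 M n as [a] h
    have h2 : a • x ∈ (Ideal.ofList [a] • (Ideal.ofList ([a] ++ as) ^ n • ⊤) : Submodule R M) := by
      refine h1 ⟨?_, hx⟩
      exact Submodule.smul_mem_smul (Ideal.subset_span (by simp)) trivial
    rw [Ideal.ofList_singleton, Submodule.ideal_span_singleton_smul] at h2
    obtain ⟨y, hy, hxy⟩ := (Submodule.mem_smul_pointwise_iff_exists _ _ _).1 h2
    have : x = (x - y) + y := by abel
    rw [this]
    refine Submodule.add_mem_sup ?_ hy
    rw [Submodule.mem_torsionBy_iff, smul_sub, hxy, sub_self]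
  rw [dl, Module.length_eq_zero_iff, Submodule.subsingleton_iff_eq_bot, ← le_bot_iff,
    Submodule.map_le_iff_le_comap, Submodule.comap_bot, Submodule.ker_mkQ]
  exact hle

theorem DS.length_Z {M : Type u} [AddCommGroup M] [Module R M] {a : R} {as : List R}
    (h : DS (a :: as) M) (n : ℕ) :
    Module.length R (Submodule.map (Submodule.mkQ (Ideal.ofList (a :: as) ^ (n + 1) • ⊤ :
      Submodule R M)) (Submodule.torsionBy R M a)) =
      Module.length R (Submodule.torsionBy R M a) := by
  symm
  apply LinearEquiv.length_eq
  refine LinearEquiv.ofBijective ((Submodule.mkQ (Ideal.ofList (a :: as) ^ (n + 1) • ⊤ :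
      Submodule R M)).submoduleMap (Submodule.torsionBy R M a)) ⟨?_, LinearMap.submoduleMap_surjective _ _⟩
  rw [injective_iff_map_eq_zero]
  rintro ⟨x, hx⟩ h0
  have h1 : Submodule.mkQ (Ideal.ofList (a :: as) ^ (n + 1) • ⊤ : Submodule R M) x = 0 :=
    congrArg Subtype.val h0
  rw [Submodule.mkQ_apply, Submodule.Quotient.mk_eq_zero] at h1
  rw [Submodule.mem_torsionBy_iff] at hx
  apply Subtype.ext
  refine DS.lemma1 _ M h x ?_ (h.1 x (by rw [hx, smul_zero]))
  exact Submodule.smul_mono (Ideal.pow_le_self (by omega)) le_rfl h1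

theorem Std.recursion {M : Type u} [AddCommGroup M] [Module R M] [Module.Finite R M] {a : R}
    {as : List R} (hs : Std (a :: as) M) (h : Good (a :: as) M) (n : ℕ) :
    Fn (Ideal.ofList (a :: as)) M (n + 2) + hn R M 0 =
      Fn (Ideal.ofList (a :: as)) M (n + 1) + Fn (Ideal.ofList as) (QuotSMulTop a M) (n + 2) := by
  have hds := Std.ds _ M h hs
  have h1 := length_succ_eq (M := M) a (Ideal.ofList as) (n + 1)
  have h2 := length_n_eq (M := M) (mem_sup_span (a := a) (q' := Ideal.ofList as)) (n + 1)
  rw [← Ideal.ofList_cons] at h1 h2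
  rw [hds.dl_zero, hds.length_Z] at h2
  have hZ : Submodule.torsionBy R M a = H0 R M :=
    le_antisymm (fun x hx => h.Z x hx) (fun x hx => hs.head_smul h x hx)
  rw [hZ, ← hl_zero_eq] at h2
  rw [← Nat.cast_inj (R := ℕ∞)]
  push_cast
  rw [h.2.1.coe_Fn, h.2.1.coe_Fn, h.quot.2.1.coe_Fn, hn, ENat.natCast_toNat h.h0.ne, h1, h2]
  ring

/-- numeric coefficients -/
def sc (h : ℕ → ℕ) : ℕ → ℕ
  | 0 => h 0
  | k + 1 => Asum k (fun i => h (i + 1))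

theorem closed_numeric (F G : ℕ → ℤ) (s t : ℕ → ℤ) (L : ℤ) (E : ℕ) (h1 : F 1 = G 1)
    (h2 : ∀ n, F (n + 2) + s 0 = F (n + 1) + G (n + 2))
    (hG : ∀ n, G (n + 1) = L * ((n + E + 1).choose (E + 1) : ℤ) +
      ∑ k ∈ Finset.range (E + 1), t k * ((n + k).choose k : ℤ))
    (ht0 : t 0 = s 0 + s 1) (ht : ∀ k, k + 1 ≤ E → t (k + 1) = s (k + 2)) (n : ℕ) :
    F (n + 1) = L * ((n + (E + 1) + 1).choose (E + 1 + 1) : ℤ) +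
      ∑ k ∈ Finset.range (E + 1 + 1), s k * ((n + k).choose k : ℤ) := by
  have hG' : ∀ n, G (n + 1) = L * ((n + E + 1).choose (E + 1) : ℤ) +
      ∑ k ∈ Finset.range (E + 1), s (k + 1) * ((n + k).choose k : ℤ) + s 0 := by
    intro n
    rw [hG, Finset.sum_range_succ', Finset.sum_range_succ' (fun k => s (k + 1) * ((n + k).choose k : ℤ))]
    have : ∑ k ∈ Finset.range E, t (k + 1) * ((n + (k + 1)).choose (k + 1) : ℤ) =
        ∑ k ∈ Finset.range E, s (k + 1 + 1) * ((n + (k + 1)).choose (k + 1) : ℤ) := by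
      apply Finset.sum_congr rfl
      intro k hk
      rw [ht k (by simpa using hk)]
    rw [this, ht0]
    simp
    ring
  induction n with
  | zero =>
    rw [zero_add, h1, ← zero_add 1, hG', Finset.sum_range_succ' _ (E + 1)]
    simp
    ring
  | succ n ih =>
    have h3 := h2 n
    rw [ih, show n + 2 = (n + 1) + 1 by omega, hG'] at h3
    have h4 : (n + 1 + (E + 1) + 1).choose (E + 1 + 1) =
        (n + 1 + E + 1).choose (E + 1) + (n + (E + 1) + 1).choose (E + 1 + 1) := by
      rw [show n + 1 + (E + 1) + 1 = (n + (E + 1) + 1) + 1 by omega, Nat.choose_succ_succ,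
        show n + 1 + E + 1 = n + (E + 1) + 1 by omega]
    have h5 : ∑ k ∈ Finset.range (E + 1 + 1), s k * ((n + 1 + k).choose k : ℤ) =
        ∑ k ∈ Finset.range (E + 1 + 1), s k * ((n + k).choose k : ℤ) +
        ∑ k ∈ Finset.range (E + 1), s (k + 1) * ((n + 1 + k).choose k : ℤ) := by
      rw [Finset.sum_range_succ' _ (E + 1), Finset.sum_range_succ' _ (E + 1)]
      have : ∀ k, ((n + 1 + (k + 1)).choose (k + 1) : ℤ) =
          ((n + (k + 1)).choose (k + 1) : ℤ) + ((n + 1 + k).choose k : ℤ) := by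
        intro k
        rw [show n + 1 + (k + 1) = (n + (k + 1)) + 1 by omega, Nat.choose_succ_succ,
          show n + 1 + k = n + (k + 1) by omega]
        push_cast
        simp only [Nat.succ_eq_add_one]
        ring
      simp only [this, mul_add, Finset.sum_add_distrib]
      simp
      ring
    rw [h4, h5]
    push_cast
    linarith

theorem closed_form (as : List R) : ∀ (a : R) (M : Type u) [AddCommGroup M] [Module R M]
    [Module.Finite R M], Good (a :: as) M → Std (a :: as) M → ∀ n,
    (Fn (Ideal.ofList (a :: as)) M (n + 1) : ℤ) =
      lead (a :: as) M * ((n + as.length + 1).choose (as.length + 1) : ℤ) +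
      ∑ k ∈ Finset.range (as.length + 1), (sc (hn R M) k : ℤ) * ((n + k).choose k : ℤ) := by
  induction as with
  | nil =>
    intro a M _ _ _ h hs n
    have h0 : Fn (Ideal.ofList ([] : List R)) (QuotSMulTop a M) 1 = Fn (Ideal.ofList [a]) M 1 := by
      rw [Fn_bar_one, Ideal.ofList_cons]
    have h2 : lead [a] M = (Fn (Ideal.ofList [a]) M 1 : ℤ) - hn R M 0 := by
      simp [lead, Asum_zero]
    induction n with
    | zero =>
      rw [h2]
      simp [sc]
    | succ n ih =>
      have h1 := hs.recursion h n
      rw [Ideal.ofList_nil] at h1 h0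
      rw [show n + 2 = (n + 1) + 1 by omega, Fn_bot, h0] at h1
      zify at h1
      rw [ih, h2] at h1
      rw [h2]
      simp [sc] at h1 ⊢
      linarith
  | cons b cs ih =>
    intro a M _ _ _ h hs n
    have hb := hs.hn_bar h
    refine closed_numeric (fun n => (Fn (Ideal.ofList (a :: b :: cs)) M n : ℤ))
      (fun n => (Fn (Ideal.ofList (b :: cs)) (QuotSMulTop a M) n : ℤ))
      (fun k => (sc (hn R M) k : ℤ)) (fun k => (sc (hn R (QuotSMulTop a M)) k : ℤ)) _ cs.length
      ?_ ?_ ?_ ?_ ?_ n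
    · rw [Fn_bar_one, ← Ideal.ofList_cons]
    · intro n
      exact_mod_cast hs.recursion h n
    · intro n
      rw [hs.lead_eq h]
      exact ih b _ h.quot (hs.quot h) n
    · have := hb 0 (Nat.zero_le _)
      simp [sc, Asum_zero, this]
    · intro k hk
      simp only [sc, Nat.cast_inj]
      rw [Asum_succ]
      apply Asum_congr
      intro i hi
      exact hb (i + 1) (by omega)

end DSSec

section NumSec

/-- coefficient extraction: zero version -/
theorem coeff_zero (D : ℕ) : ∀ (c : ℕ → ℤ) (N : ℕ),
    (∀ n ≥ N, ∑ k ∈ Finset.range (D + 1), c k * ((n + k).choose k : ℤ) = 0) →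
    ∀ k ≤ D, c k = 0 := by
  induction D with
  | zero =>
    intro c N h k hk
    have := h N le_rfl
    obtain rfl : k = 0 := by omega
    simpa using this
  | succ D ih =>
    intro c N h k hk
    have h1 : ∀ n ≥ N + 1, ∑ k ∈ Finset.range (D + 1), c (k + 1) * ((n + k).choose k : ℤ) = 0 := by
      intro n hn
      obtain ⟨m, rfl⟩ : ∃ m, n = m + 1 := ⟨n - 1, by omega⟩
      have e1 := h (m + 1) (by omega)
      have e2 := h m (by omega)
      rw [Finset.sum_range_succ'] at e1 e2
      have e3 : ∑ k ∈ Finset.range (D + 1), c (k + 1) * ((m + 1 + (k + 1)).choose (k + 1) : ℤ)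
          = ∑ k ∈ Finset.range (D + 1), c (k + 1) * ((m + 1 + k).choose k : ℤ) +
            ∑ k ∈ Finset.range (D + 1), c (k + 1) * ((m + (k + 1)).choose (k + 1) : ℤ) := by
        rw [← Finset.sum_add_distrib]
        refine Finset.sum_congr rfl fun k _ => ?_
        rw [← mul_add, show m + 1 + (k + 1) = (m + 1 + k) + 1 by omega, Nat.choose_succ_succ,
          show m + (k + 1) = m + 1 + k by omega]
        push_cast
        rfl
      simp only [add_zero, Nat.choose_zero_right] at e1 e2
      linarith
    have h2 := ih (fun k => c (k + 1)) (N + 1) h1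
    rcases k with _ | k
    · have := h N le_rfl
      rw [Finset.sum_range_succ', Finset.sum_eq_zero] at this
      · simpa using this
      · intro k hk
        rw [h2 k (by simpa [Nat.lt_succ_iff] using hk), zero_mul]
    · exact h2 k (by omega)

theorem hsPoly_succ (d : ℕ) (e : ℕ → ℤ) (n : ℕ) :
    hsPoly d e (n + 1) = ∑ k ∈ Finset.range (d + 1),
      ((-1 : ℤ) ^ (d - k) * e (d - k)) * ((n + k).choose k : ℤ) := by
  unfold hsPoly
  rw [← Finset.sum_range_reflect]
  refine Finset.sum_congr rfl fun k hk => ?_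
  have hk' : k ≤ d := by simpa [Nat.lt_succ_iff] using hk
  rw [show d + 1 - 1 - k = d - k by omega, show n + 1 + d - 1 - (d - k) = n + k by omega,
    show d - (d - k) = k by omega]

theorem choose_le_pow_succ (n k D : ℕ) (hk : k ≤ D) :
    (n + k).choose k ≤ (D + 1) ^ D * (n + 1) ^ D := by
  calc (n + k).choose k ≤ (n + k) ^ k := Nat.choose_le_pow _ _
    _ ≤ ((D + 1) * (n + 1)) ^ k := by
        apply Nat.pow_le_pow_left
        nlinarith
    _ ≤ ((D + 1) * (n + 1)) ^ D := Nat.pow_le_pow_right (by positivity) hk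
    _ = _ := mul_pow _ _ _

theorem pow_le_choose (n D : ℕ) : (n + 1) ^ (D + 1) ≤ (D + 1).factorial * (n + 1 + D).choose (D + 1) := by
  have h2 := Nat.pow_succ_le_ascFactorial (n + 1) (D + 1)
  rw [Nat.ascFactorial_eq_factorial_mul_choose] at h2
  rwa [show n + 1 + D = n + (D + 1) by omega]

/-- no excessive growth -/
theorem not_LB (F : ℕ → ℕ) (D : ℕ) (e : ℕ → ℤ)
    (hF : ∀ᶠ n in atTop, (F n : ℤ) = hsPoly (D + 1) e n) : ¬ LB F D (e 0 + 1) := by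
  rintro ⟨C, hC⟩
  obtain ⟨N, hN⟩ := eventually_atTop.1 hF
  set B : ℤ := ∑ k ∈ Finset.range (D + 1), |e (D + 1 - k)| with hB
  have key : ∀ n ≥ N, ((n + 1 + D).choose (D + 1) : ℤ) ≤
      (B * (D + 1) ^ D + C * 2 ^ D) * ((n : ℤ) + 1) ^ D := by
    intro n hn
    have h1 := hC (n + 1)
    rw [hN (n + 1) (by omega), hsPoly_succ, Finset.sum_range_succ] at h1
    have h2 : ∑ k ∈ Finset.range (D + 1),
        ((-1 : ℤ) ^ (D + 1 - k) * e (D + 1 - k)) * ((n + k).choose k : ℤ) ≤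
        B * (((D : ℤ) + 1) ^ D * ((n : ℤ) + 1) ^ D) := by
      rw [hB, Finset.sum_mul]
      refine Finset.sum_le_sum fun k hk => ?_
      have hk' : k ≤ D := by simpa [Nat.lt_succ_iff] using hk
      have h3 := choose_le_pow_succ n k D hk'
      zify at h3
      refine mul_le_mul ?_ h3 (by positivity) (by positivity)
      refine (le_abs_self _).trans ?_
      rw [abs_mul, abs_pow]
      simp
    have h4 : ((n + 1 : ℕ) : ℤ) + 1 ≤ 2 * ((n : ℤ) + 1) := by push_cast; linarith
    have h5 : (((n + 1 : ℕ) : ℤ) + 1) ^ D ≤ (2 * ((n : ℤ) + 1)) ^ D :=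
      pow_le_pow_left₀ (by positivity) h4 D
    rw [mul_pow] at h5
    have h6 : (C : ℤ) * (((n + 1 : ℕ) : ℤ) + 1) ^ D ≤ C * (2 ^ D * ((n : ℤ) + 1) ^ D) := by
      gcongr
    have h7 : n + (D + 1) = n + 1 + D := by omega
    simp only [Nat.sub_self, pow_zero, one_mul, h7] at h1
    linarith
  set A : ℤ := B * (D + 1) ^ D + C * 2 ^ D with hA
  have hB0 : 0 ≤ B := Finset.sum_nonneg fun _ _ => abs_nonneg _
  have hA0 : 0 ≤ A := by positivity
  obtain ⟨n, hn⟩ : ∃ n : ℕ, n ≥ N ∧ ((D + 1).factorial : ℤ) * A < (n : ℤ) + 1 :=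
    ⟨N + (((D + 1).factorial : ℤ) * A).toNat, by omega, by
      have := Int.self_le_toNat (((D + 1).factorial : ℤ) * A)
      push_cast
      linarith⟩
  have h1 := key n hn.1
  have h2 := pow_le_choose n D
  zify at h2
  have h3 : ((n : ℤ) + 1) ^ (D + 1) ≤ ((D + 1).factorial : ℤ) * (A * ((n : ℤ) + 1) ^ D) :=
    h2.trans (by gcongr)
  have h4 : (0 : ℤ) < ((n : ℤ) + 1) ^ D := by positivity
  rw [pow_succ] at h3
  nlinarith

theorem sc_eq (h : ℕ → ℕ) (i : ℕ) : (sc h i : ℤ) =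
    ∑ j ∈ Finset.range (i + 1), (bin i j : ℤ) * (h j : ℤ) := by
  rcases i with _ | i
  · simp [sc, bin]
  · rw [Finset.sum_range_succ']
    simp [sc, bin, Asum]

theorem coeff_final (F : ℕ → ℕ) (D : ℕ) (e : ℕ → ℤ) (h : ℕ → ℕ) (l : ℤ)
    (hF : ∀ᶠ n in atTop, (F n : ℤ) = hsPoly (D + 1) e n)
    (hc : ∀ n, (F (n + 1) : ℤ) = l * ((n + D + 1).choose (D + 1) : ℤ) +
      ∑ k ∈ Finset.range (D + 1), (sc h k : ℤ) * ((n + k).choose k : ℤ)) (i : ℕ) (hi : i < D + 1) :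
    e (D + 1 - i) = (-1 : ℤ) ^ (D + 1 - i) * (sc h i : ℤ) := by
  obtain ⟨N, hN⟩ := eventually_atTop.1 hF
  have h1 := coeff_zero (D + 1) (fun k => (-1 : ℤ) ^ (D + 1 - k) * e (D + 1 - k) -
    (if k = D + 1 then l else (sc h k : ℤ))) N (by
      intro n hn
      simp only [sub_mul]
      rw [Finset.sum_sub_distrib, ← hsPoly_succ, ← hN (n + 1) (by omega), hc,
        Finset.sum_range_succ _ (D + 1), if_pos rfl, add_comm (l * _), sub_eq_zero, add_assoc n D 1]
      congr 1
      refine Finset.sum_congr rfl fun k hk => ?_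
      rw [if_neg (by simp at hk; omega)]) i (by omega)
  simp only [show i ≠ D + 1 by omega, if_false, sub_eq_zero] at h1
  rw [← h1, ← mul_assoc, ← mul_pow]
  simp

end NumSec

/-- **Schenzel.** In a generalized Cohen–Macaulay local ring of dimension `d`, for an ideal `I`
generated by a standard system of parameters, `e_{d-i}(I) = (-1)^{d-i} ∑_{j=0}^{i} C(i-1,j-1)
λ(Hʲ_m(R))` for `0 ≤ i ≤ d-1`. -/
theorem stmt_10 (R : Type u) [CommRing R] [IsLocalRing R] [IsNoetherianRing R]
    (d : ℕ) (hd : ringKrullDim R = ((d : ℕ∞) : WithBot ℕ∞))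
    (h : ℕ → ℕ)
    (hh : ∀ i, i < d → mlen R (lcoh R i R) = ((h i : ℕ∞) : WithBot ℕ∞))
    (I : Ideal R) (hpar : IsParameterIdeal R I d R)
    (e : ℕ → ℤ) (he : HasHilbCoeffs R I R d e)
    (l1 : ℕ) (hl1 : mlen R (R ⧸ (I • (⊤ : Submodule R R))) = ((l1 : ℕ∞) : WithBot ℕ∞))
    (hstd : (l1 : ℤ) - e 0 = ∑ i ∈ Finset.range d, ((d - 1).choose i : ℤ) * (h i : ℤ)) :
    ∀ i, i < d →
      e (d - i) = (-1 : ℤ) ^ (d - i) *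
        ∑ j ∈ Finset.range (i + 1), (bin i j : ℤ) * (h j : ℤ) := by 
  obtain ⟨ℓ, hℓ, hF⟩ := he
  have hlen : ∀ (M : Type u) [AddCommGroup M] [Module R M] (m : ℕ),
      mlen R M = ((m : ℕ∞) : WithBot ℕ∞) → Module.length R M = (m : ℕ∞) := by
    intro M _ _ m hm
    have h1 : ((Module.length R M : ℕ∞) : WithBot ℕ∞) = mlen R M := by
      rw [Module.coe_length]
      rfl
    rw [hm] at h1
    exact_mod_cast h1
  have hFin : FinHilb R I R := fun n => by
    rw [hlen _ _ (hℓ n)]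
    exact ENat.natCast_lt_top _
  have hFn : ∀ n, Fn I R n = ℓ n := fun n => by
    unfold Fn
    rw [hlen _ _ (hℓ n)]
    rfl
  have hFn1 : Fn I R 1 = l1 := by
    unfold Fn
    rw [pow_one, hlen _ _ hl1]
    rfl
  have hF' : ∀ᶠ n in atTop, (Fn I R n : ℤ) = hsPoly d e n := by
    filter_upwards [hF] with n hn
    rw [hFn, hn]
  rcases d with _ | D
  · intro i hi
    omega
  by_cases hI : I = ⊤
  · have hz : ∀ n, Fn I R n = 0 := fun n => by
      unfold Fn
      rw [hI]
      have : Subsingleton (R ⧸ ((⊤ : Ideal R) ^ n • ⊤ : Submodule R R)) := by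
        rw [Submodule.Quotient.subsingleton_iff, Ideal.top_pow, Submodule.top_smul]
      rw [Module.length_eq_zero]
      rfl
    obtain ⟨N, hN⟩ := eventually_atTop.1 hF'
    have he0 := coeff_zero (D + 1) (fun k => (-1 : ℤ) ^ (D + 1 - k) * e (D + 1 - k)) N (by
      intro n hn
      rw [← hsPoly_succ, ← hN (n + 1) (by omega), hz]
      rfl)
    have he1 : ∀ k ≤ D + 1, e (D + 1 - k) = 0 := fun k hk => by
      have := he0 k hk
      simpa using this
    have hl10 : l1 = 0 := by rw [← hFn1, hz]
    have he00 : e 0 = 0 := by simpa using he1 (D + 1) le_rfl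
    rw [hl10, he00] at hstd
    have hsum : ∑ i ∈ Finset.range (D + 1), ((D + 1 - 1).choose i : ℤ) * (h i : ℤ) = 0 := by
      rw [← hstd]
      simp
    rw [Finset.sum_eq_zero_iff_of_nonneg (fun _ _ => by positivity)] at hsum
    intro i hi
    rw [he1 i hi.le, Finset.sum_eq_zero, mul_zero]
    intro j hj
    have hj' : j < D + 1 := by
      simp at hj
      omega
    have h1 := hsum j (Finset.mem_range.2 hj')
    rcases mul_eq_zero.1 h1 with h2 | h2
    · exact absurd (by exact_mod_cast h2) (Nat.choose_pos (show j ≤ D + 1 - 1 by omega)).ne'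
    · rw [h2, mul_zero]
  obtain ⟨⟨a, ha⟩, -⟩ := hpar
  have hIof : Ideal.ofList (a 0 :: List.ofFn fun i : Fin D => a i.succ) = I := by
    rw [← List.ofFn_succ, ha]
    unfold Ideal.ofList
    congr 1
    ext x
    simp [List.mem_ofFn, Fin.exists_fin_succ, eq_comm]
  set as : List R := List.ofFn fun i : Fin D => a i.succ with has
  have hlas : as.length = D := by simp [has]
  have hhl : ∀ i < D + 1, hl R i R = (h i : ℕ∞) := fun i hi => by
    have h1 := hh i hi
    rw [lcoh_mlen] at h1
    exact_mod_cast h1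
  have hhn : ∀ i < D + 1, hn R R i = h i := fun i hi => by
    unfold hn
    rw [hhl i hi]
    rfl
  have hgood : Good (a 0 :: as) R := by
    refine ⟨fun b hb => ?_, ?_, fun i hi => ?_⟩
    · apply IsLocalRing.le_maximalIdeal hI
      rw [← hIof]
      exact Ideal.subset_span hb
    · rw [hIof]
      exact hFin
    · rw [hhl i (by simpa [hlas] using hi)]
      exact ENat.natCast_lt_top _
  have hlead : lead (a 0 :: as) R = e 0 := by
    unfold lead
    rw [hIof, hFn1, List.length_cons, hlas, Nat.add_sub_cancel]
    have h1 : (Asum D (hn R R) : ℤ) = ∑ i ∈ Finset.range (D + 1), (D.choose i : ℤ) * (h i : ℤ) := by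
      unfold Asum
      push_cast
      refine Finset.sum_congr rfl fun i hi => ?_
      rw [hhn i (Finset.mem_range.1 hi)]
    rw [Nat.add_sub_cancel] at hstd
    rw [h1, ← hstd]
    ring
  have hs : Std (a 0 :: as) R := by
    unfold Std
    rw [hlead, hIof, List.length_cons, hlas, Nat.add_sub_cancel]
    exact not_LB _ D e hF'
  have hc := closed_form as (a 0) R hgood hs
  rw [hIof, hlas] at hc
  intro i hi
  rw [coeff_final (Fn I R) D e (hn R R) _ hF' hc i hi, sc_eq]
  congr 1
  refine Finset.sum_congr rfl fun j hj => ?_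
  rw [hhn j (by simp at hj; omega)]
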